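/- arXiv:1906.12056 — 2 statements merged into one kernel-verified Lean document; each statement's English description precedes it below -/
import Mathlib

section
/- For every σ > 0 and every integer d ≥ 1, the quantity β := (1/d)·Σ_{j=0}^{d−1} 1/(1 + 2σ − 2σ·cos(2πj/d))² satisfies β = (2ω^{2d+1} − ξω^{2d} + 2ξdω^d − 2ω + ξ) / (σ²·ξ³·(1 − ω^d)²). -/
/-! With `s = √(4σ+1)` one has `ω = (s - 1) / (s + 1)`, `σ = ω / (1 - ω)²` and `ξ = (ω² - 1) / ω`,
so `1 + 2σ - 2σ cos θ = (1 - ωz)(1 - ωz⁻¹) / (1 - ω)²` for `z = exp (iθ)`. On the `d`-th roots of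
unity the function `1 / ((1 - ωz)(1 - ωz⁻¹))` is the trigonometric polynomial with coefficients
`(ω ^ k + ω ^ (d - k)) / ((1 - ω²)(1 - ω ^ d))`, `0 ≤ k < d`, and by Parseval the sum of its squares
is `d` times the sum of the squared coefficients, which is a geometric sum up to a constant term.
-/

open Finset

section RootsOfUnity

variable {K : Type*} [Field K] {ζ w z : K} {d : ℕ}

theorem sum_pow_mul_inv_pow_eq_ite (hζ : IsPrimitiveRoot ζ d) {k l : ℕ} (hk : k < d) (hl : l < d) :
    ∑ j ∈ range d, (ζ ^ j) ^ k * ((ζ ^ j)⁻¹) ^ l = if k = l then (d : K) else 0 := by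
  have hζ0 : ζ ≠ 0 := hζ.ne_zero (by lia)
  have hterm (j : ℕ) : (ζ ^ j) ^ k * ((ζ ^ j)⁻¹) ^ l = (ζ ^ k / ζ ^ l) ^ j := by
    rw [div_pow, inv_pow, ← div_eq_mul_inv, pow_right_comm ζ j k, pow_right_comm ζ j l]
  simp_rw [hterm]
  split_ifs with hkl
  · simp [hkl, hζ0]
  · have hne : ζ ^ k / ζ ^ l ≠ 1 := fun h ↦
      hkl (hζ.pow_inj hk hl ((div_eq_one_iff_eq (pow_ne_zero l hζ0)).mp h))
    have hroot : (ζ ^ k / ζ ^ l) ^ d = 1 := by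
      rw [div_pow, pow_right_comm ζ k, pow_right_comm ζ l, hζ.pow_eq_one, one_pow, one_pow, div_one]
    rw [geom_sum_eq hne, hroot, sub_self, zero_div]

theorem parseval_of_isPrimitiveRoot (hζ : IsPrimitiveRoot ζ d) (a b : ℕ → K) :
    ∑ j ∈ range d, (∑ k ∈ range d, a k * (ζ ^ j) ^ k) * ∑ l ∈ range d, b l * ((ζ ^ j)⁻¹) ^ l =
      d * ∑ k ∈ range d, a k * b k := by
  calc
    _ = ∑ k ∈ range d, ∑ l ∈ range d,
          a k * b l * ∑ j ∈ range d, (ζ ^ j) ^ k * ((ζ ^ j)⁻¹) ^ l := by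
      simp_rw [sum_mul_sum, mul_sum]
      rw [sum_comm]
      refine sum_congr rfl fun k _ ↦ ?_
      rw [sum_comm]
      exact sum_congr rfl fun l _ ↦ sum_congr rfl fun j _ ↦ mul_mul_mul_comm ..
    _ = ∑ k ∈ range d, ∑ l ∈ range d, a k * b l * if k = l then (d : K) else 0 :=
      sum_congr rfl fun k hk ↦ sum_congr rfl fun l hl ↦ by
        rw [sum_pow_mul_inv_pow_eq_ite hζ (mem_range.mp hk) (mem_range.mp hl)]
    _ = d * ∑ k ∈ range d, a k * b k := by
      rw [mul_sum]
      refine sum_congr rfl fun k hk ↦ ?_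
      simp only [mul_ite, mul_zero, sum_ite_eq, hk, if_true, mul_comm (d : K)]

theorem one_sub_mul_mul_one_sub_mul_inv_mul_sum (hz : z ^ d = 1) :
    (1 - w * z) * (1 - w * z⁻¹) * ∑ k ∈ range d, (w ^ k + w ^ (d - k)) * z ^ k =
      (1 - w ^ 2) * (1 - w ^ d) := by
  rcases eq_or_ne d 0 with rfl | hd
  · simp
  have hz0 : z ≠ 0 := by rintro rfl; simp [hd] at hz
  have hforward : (1 - w * z) * ∑ k ∈ range d, w ^ k * z ^ k = 1 - w ^ d := by
    simp_rw [← mul_pow]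
    rw [mul_neg_geom_sum, mul_pow, hz, mul_one]
  have hbackward : (1 - w * z⁻¹) * ∑ k ∈ range d, w ^ (d - k) * z ^ k = w * z⁻¹ * (1 - w ^ d) := by
    have hreindex : ∑ k ∈ range d, w ^ (d - k) * z ^ k =
        w * ∑ k ∈ range d, z ^ k * w ^ (d - 1 - k) := by
      rw [mul_sum]
      refine sum_congr rfl fun k hk ↦ ?_
      rw [show d - k = d - 1 - k + 1 by grind, pow_succ']
      ring
    have hgeom : (∑ k ∈ range d, z ^ k * w ^ (d - 1 - k)) * (z - w) = 1 - w ^ d := by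
      rw [geom_sum₂_mul, hz]
    rw [hreindex, ← hgeom]
    field_simp
  simp_rw [add_mul, sum_add_distrib]
  linear_combination (1 - w * z⁻¹) * hforward + (1 - w * z) * hbackward -
    w ^ 2 * (1 - w ^ d) * mul_inv_cancel₀ hz0

theorem one_div_one_sub_mul_mul_one_sub_mul_inv (hz : z ^ d = 1) (hw2 : w ^ 2 ≠ 1)
    (hwd : w ^ d ≠ 1) :
    1 / ((1 - w * z) * (1 - w * z⁻¹)) =
      (∑ k ∈ range d, (w ^ k + w ^ (d - k)) * z ^ k) / ((1 - w ^ 2) * (1 - w ^ d)) := by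
  have hprod := one_sub_mul_mul_one_sub_mul_inv_mul_sum (w := w) hz
  have hne : (1 - w ^ 2) * (1 - w ^ d) ≠ 0 :=
    mul_ne_zero (sub_ne_zero.mpr hw2.symm) (sub_ne_zero.mpr hwd.symm)
  rw [div_eq_div_iff (left_ne_zero_of_mul (hprod.trans_ne hne)) hne, one_mul, ← hprod, mul_comm]

theorem sum_pow_add_pow_sub_sq_mul_one_sub_sq {R : Type*} [CommRing R] (w : R) (d : ℕ) :
    (∑ k ∈ range d, (w ^ k + w ^ (d - k)) ^ 2) * (1 - w ^ 2) =
      (1 + w ^ 2) * (1 - w ^ (2 * d)) + 2 * d * w ^ d * (1 - w ^ 2) := by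
  have hgeom : (∑ k ∈ range d, (w ^ 2) ^ k) * (1 - w ^ 2) = 1 - w ^ (2 * d) := by
    rw [geom_sum_mul_neg, pow_mul]
  have hreflect : ∑ k ∈ range d, (w ^ 2) ^ (d - k) = w ^ 2 * ∑ k ∈ range d, (w ^ 2) ^ k := by
    rw [← sum_range_reflect, mul_sum]
    refine sum_congr rfl fun k hk ↦ ?_
    rw [← pow_succ']
    congr 1
    grind
  have hexpand : ∑ k ∈ range d, (w ^ k + w ^ (d - k)) ^ 2 =
      ∑ k ∈ range d, (w ^ 2) ^ k + 2 * d * w ^ d + ∑ k ∈ range d, (w ^ 2) ^ (d - k) := by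
    have hcross : ∑ k ∈ range d, 2 * (w ^ k * w ^ (d - k)) = 2 * d * w ^ d := by
      rw [sum_congr rfl fun k hk ↦ by rw [pow_mul_pow_sub w (mem_range.mp hk).le]]
      simp only [sum_const, card_range, nsmul_eq_mul]
      ring
    rw [← hcross, ← sum_add_distrib, ← sum_add_distrib]
    exact sum_congr rfl fun k _ ↦ by ring
  rw [hexpand, hreflect]
  linear_combination (1 + w ^ 2) * hgeom

theorem sum_inv_sq_one_sub_mul_mul_one_sub_mul_inv (hζ : IsPrimitiveRoot ζ d)
    (hw2 : w ^ 2 ≠ 1) (hwd : w ^ d ≠ 1) :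
    ∑ j ∈ range d, 1 / ((1 - w * ζ ^ j) * (1 - w * (ζ ^ j)⁻¹)) ^ 2 =
      d * ((1 + w ^ 2) * (1 - w ^ (2 * d)) + 2 * d * w ^ d * (1 - w ^ 2)) /
        ((1 - w ^ 2) ^ 3 * (1 - w ^ d) ^ 2) := by
  have h2 : 1 - w ^ 2 ≠ 0 := sub_ne_zero.mpr hw2.symm
  have h1d : 1 - w ^ d ≠ 0 := sub_ne_zero.mpr hwd.symm
  -- The unsquared term is invariant under `z ↦ z⁻¹`, so Parseval applies to its square.
  have hsq (j : ℕ) : 1 / ((1 - w * ζ ^ j) * (1 - w * (ζ ^ j)⁻¹)) ^ 2 =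
      (∑ k ∈ range d, (w ^ k + w ^ (d - k)) * (ζ ^ j) ^ k) *
        (∑ k ∈ range d, (w ^ k + w ^ (d - k)) * ((ζ ^ j)⁻¹) ^ k) /
          ((1 - w ^ 2) * (1 - w ^ d)) ^ 2 := by
    have hz : (ζ ^ j) ^ d = 1 := by rw [pow_right_comm, hζ.pow_eq_one, one_pow]
    have hz_inv : ((ζ ^ j)⁻¹) ^ d = 1 := by rw [inv_pow, hz, inv_one]
    have hkernel_inv := one_div_one_sub_mul_mul_one_sub_mul_inv hz_inv hw2 hwd
    rw [inv_inv, mul_comm (1 - _)] at hkernel_inv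
    rw [← one_div_pow, sq, sq, mul_div_mul_comm, ← hkernel_inv,
      ← one_div_one_sub_mul_mul_one_sub_mul_inv hz hw2 hwd]
  simp_rw [hsq]
  rw [← sum_div, parseval_of_isPrimitiveRoot hζ, ← sum_pow_add_pow_sub_sq_mul_one_sub_sq]
  simp_rw [← sq]
  field_simp

end RootsOfUnity

theorem one_add_sq_sub_two_mul_cos_eq_mul (w θ : ℂ) :
    1 + w ^ 2 - 2 * w * Complex.cos θ =
      (1 - w * Complex.exp (θ * Complex.I)) * (1 - w * (Complex.exp (θ * Complex.I))⁻¹) := by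
  have hinv := mul_inv_cancel₀ (Complex.exp_ne_zero (θ * Complex.I))
  have hcos := Complex.two_cos θ
  rw [neg_mul, Complex.exp_neg] at hcos
  linear_combination -w * hcos - w ^ 2 * hinv

theorem sum_inv_sq_one_add_sq_sub_two_mul_cos {w : ℂ} {d : ℕ} (hd : d ≠ 0)
    (hw2 : w ^ 2 ≠ 1) (hwd : w ^ d ≠ 1) :
    ∑ j ∈ range d, 1 / (1 + w ^ 2 - 2 * w * Complex.cos (2 * Real.pi * j / d)) ^ 2 =
      d * ((1 + w ^ 2) * (1 - w ^ (2 * d)) + 2 * d * w ^ d * (1 - w ^ 2)) /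
        ((1 - w ^ 2) ^ 3 * (1 - w ^ d) ^ 2) := by
  rw [← sum_inv_sq_one_sub_mul_mul_one_sub_mul_inv (Complex.isPrimitiveRoot_exp d hd) hw2 hwd]
  refine sum_congr rfl fun j _ ↦ ?_
  rw [one_add_sq_sub_two_mul_cos_eq_mul, ← Complex.exp_nat_mul]
  ring_nf

theorem mean_inv_sq_one_add_two_mul_sub_cos {σ ω ξ : ℂ} {d : ℕ} (hd : d ≠ 0) (hω0 : ω ≠ 0)
    (hω2 : ω ^ 2 ≠ 1) (hωd : ω ^ d ≠ 1) (hσ : σ = ω / (1 - ω) ^ 2) (hξ : ξ = (ω ^ 2 - 1) / ω) :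
    (1 / d : ℂ) * ∑ j ∈ range d, 1 / (1 + 2 * σ - 2 * σ * Complex.cos (2 * Real.pi * j / d)) ^ 2 =
      (2 * ω ^ (2 * d + 1) - ξ * ω ^ (2 * d) + 2 * ξ * d * ω ^ d - 2 * ω + ξ) /
        (σ ^ 2 * ξ ^ 3 * (1 - ω ^ d) ^ 2) := by
  have hω1 : 1 - ω ≠ 0 := sub_ne_zero.mpr fun h ↦ hω2 (by rw [← h, one_pow])
  have h2 : 1 - ω ^ 2 ≠ 0 := sub_ne_zero.mpr hω2.symm
  have h1d : 1 - ω ^ d ≠ 0 := sub_ne_zero.mpr hωd.symm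
  have hterm (x : ℂ) : 1 / (1 + 2 * σ - 2 * σ * x) ^ 2 =
      (1 - ω) ^ 4 * (1 / (1 + ω ^ 2 - 2 * ω * x) ^ 2) := by
    have hbase : 1 + 2 * σ - 2 * σ * x = (1 + ω ^ 2 - 2 * ω * x) / (1 - ω) ^ 2 := by
      rw [hσ]
      field_simp
      ring
    rw [hbase, div_pow, one_div_div, ← pow_mul, mul_one_div]
  simp_rw [hterm]
  rw [← mul_sum, sum_inv_sq_one_add_sq_sub_two_mul_cos hd hω2 hωd, hσ, hξ, ← neg_sub 1 (ω ^ 2)]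
  field_simp
  ring

theorem pow_ne_one_of_abs_lt_one {R : Type*} [Ring R] [LinearOrder R] [IsStrictOrderedRing R]
    {x : R} (hx : |x| < 1) {n : ℕ} (hn : n ≠ 0) : x ^ n ≠ 1 :=
  ((le_abs_self _).trans_lt (abs_pow x n ▸ pow_lt_one₀ (abs_nonneg x) hx hn)).ne

theorem abs_sub_div_add_lt_one {F : Type*} [Field F] [LinearOrder F] [IsStrictOrderedRing F]
    {a b : F} (ha : 0 < a) (hb : 0 < b) : |(a - b) / (a + b)| < 1 := by
  rw [abs_div, abs_of_pos (add_pos ha hb), div_lt_one (add_pos ha hb), abs_lt]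
  constructor <;> linarith

theorem beta_closed_form_general {σ : ℝ} (hσ : -1 / 4 < σ) (hσ0 : σ ≠ 0) {d : ℕ} (hd : 1 ≤ d) :
    let ω : ℝ := (2 * σ + 1 - Real.sqrt (4 * σ + 1)) / (2 * σ)
    let ξ : ℝ := -Real.sqrt (1 + 4 * σ) / σ
    (1 / d : ℝ) * ∑ j : Fin d, 1 / (1 + 2 * σ - 2 * σ * Real.cos (2 * Real.pi * j.val / d)) ^ 2
      = (2 * ω ^ (2 * d + 1) - ξ * ω ^ (2 * d) + 2 * ξ * d * ω ^ d - 2 * ω + ξ) /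
          (σ ^ 2 * ξ ^ 3 * (1 - ω ^ d) ^ 2) := by
  intro ω ξ
  set s : ℝ := Real.sqrt (4 * σ + 1) with hs
  have hs0 : 0 < s := Real.sqrt_pos.mpr (by linarith)
  have hσs : 4 * σ = (s - 1) * (s + 1) := by
    linear_combination -Real.sq_sqrt (by linarith : 0 ≤ 4 * σ + 1)
  have hs_sub : s - 1 ≠ 0 := left_ne_zero_of_mul (hσs ▸ mul_ne_zero four_ne_zero hσ0)
  have hs_add : s + 1 ≠ 0 := by positivity
  have hω : ω = (s - 1) / (s + 1) := by
    rw [div_eq_div_iff (by simpa using hσ0) hs_add]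
    linear_combination hσs
  have hω1 : |ω| < 1 := hω ▸ abs_sub_div_add_lt_one hs0 one_pos
  have hσω : σ = ω / (1 - ω) ^ 2 := by
    rw [hω, one_sub_div hs_add]
    field_simp
    linear_combination hσs
  have hξω : ξ = (ω ^ 2 - 1) / ω := by
    have hξ : ξ = -s / σ := by rw [hs, add_comm]
    rw [hξ, hω, div_eq_div_iff hσ0 (div_ne_zero hs_sub hs_add)]
    field_simp
    linear_combination s * hσs
  have hω0 : ω ≠ 0 := hω ▸ div_ne_zero hs_sub hs_add
  have hω2 : ω ^ 2 ≠ 1 := pow_ne_one_of_abs_lt_one hω1 two_ne_zero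
  have hωd : ω ^ d ≠ 1 := pow_ne_one_of_abs_lt_one hω1 (by lia)
  have hmean := mean_inv_sq_one_add_two_mul_sub_cos (σ := σ) (ω := ω) (ξ := ξ) (by lia)
    (mod_cast hω0) (mod_cast hω2) (mod_cast hωd) (mod_cast hσω) (mod_cast hξω)
  apply Complex.ofReal_injective
  push_cast
  rwa [sum_range] at hmean

/-- For every `σ > 0` and every integer `d ≥ 1`, the quantity
`β = (1/d) ∑_{j=0}^{d-1} 1/(1 + 2σ - 2σ cos(2πj/d))²` satisfies
`β = (2ω^{2d+1} - ξω^{2d} + 2ξdω^d - 2ω + ξ)/(σ²ξ³(1 - ω^d)²)`, where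
`ω = (2σ+1-√(4σ+1))/(2σ)` and `ξ = -√(1+4σ)/σ`. -/
theorem beta_closed_form (σ : ℝ) (hσ : 0 < σ) (d : ℕ) (hd : 1 ≤ d) :
    let ω : ℝ := (2 * σ + 1 - Real.sqrt (4 * σ + 1)) / (2 * σ)
    let ξ : ℝ := -Real.sqrt (1 + 4 * σ) / σ
    (1 / d : ℝ) * ∑ j : Fin d, 1 / (1 + 2 * σ - 2 * σ * Real.cos (2 * Real.pi * j.val / d)) ^ 2
      = (2 * ω ^ (2 * d + 1) - ξ * ω ^ (2 * d) + 2 * ξ * d * ω ^ d - 2 * ω + ξ) /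
          (σ ^ 2 * ξ ^ 3 * (1 - ω ^ d) ^ 2) :=
  beta_closed_form_general (by linarith) hσ.ne' hd
end

section
/- (Privacy guarantee for DP-LSSGD.) Let ε > 0, δ > 0, and suppose there exists μ ∈ (0,1) such that, with α := log(1/δ)/((1−μ)ε) + 1, one has α ≤ log( μn³ε / (5b³Tα + μbn²ε) ) and 5b²Tα/(μn²ε) ≥ 3/2. Let S = (f₁,…,f_n) and S′ = (f′₁,…,f′_n) be two families of differentiable G-Lipschitz functions ℝ^d → ℝ that differ in exactly one index. Run DP-LSSGD for T iterations from the same initial point w⁰ on each dataset, with the same step sizes and with per-coordinate Gaussian noise variance ν² = 20TαG²/(μn²ε): w^{k+1} = w^k − η_k · A_σ^{-1}( (1/b)·Σ_{i∈B_k} ∇f_i(w^k) + n_k ), where the B_k are independent uniformly random size-b subsets of {1,…,n} and the n_k are independent N(0, ν²I_d) Gaussian vectors, all independent of each other. Then the final iterate is (ε, δ)-differentially private: for every Borel set O ⊆ ℝ^d, P[w^T computed from S ∈ O] ≤ e^ε · P[w^T computed from S′ ∈ O] + δ. -/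
open Matrix MeasureTheory ProbabilityTheory
open scoped ENNReal NNReal

/-- The circulant matrix `A_σ = I - σL`, where `L` is the one-dimensional discrete
Laplacian with periodic boundary conditions. -/
noncomputable def lapMat (σ : ℝ) (d : ℕ) : Matrix (Fin d) (Fin d) ℝ :=
  Matrix.of fun j k =>
    if j = k then 1 + 2 * σ
    else if (j.val + 1) % d = k.val ∨ (k.val + 1) % d = j.val then -σ
    else 0

instance (n : ℕ) : MeasurableSpace (Finset (Fin n)) := ⊤

/-- The uniform distribution on size-`b` subsets of `{1,…,n}`. -/
noncomputable def batchMeasure (n b : ℕ) : Measure (Finset (Fin n)) :=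
  ((Finset.powersetCard b (Finset.univ : Finset (Fin n))).card : ℝ≥0∞)⁻¹ •
    ∑ B ∈ Finset.powersetCard b (Finset.univ : Finset (Fin n)), Measure.dirac B

/-- The isotropic Gaussian measure `N(0, ν²I_d)` on `ℝ^d`. -/
noncomputable def noiseMeasure (d : ℕ) (ν : ℝ) : Measure (EuclideanSpace ℝ (Fin d)) :=
  (Measure.pi fun _ : Fin d => gaussianReal 0 (Real.toNNReal (ν ^ 2))).map
    (EuclideanSpace.equiv (Fin d) ℝ).symm

/-!
The claim `D_α(P ‖ Q) ≤ ρ` on Rényi divergence is used in its Hölder-dual form, as a bound on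
`∫ h dP` by the `L^β(Q)` norm of `h`. In this form post-processing, adaptive composition and
averaging over a common randomness are immediate, so only one step has to be analysed, and the
matrix `A_σ⁻¹` and the step sizes are mere post-processing of the noisy batch mean.

Let `i₀` be the index at which the datasets differ and `γ = b / n`. A uniform batch is obtained by
drawing a batch `B` that avoids `i₀` and an element `j ∈ B`, and swapping `j` for `i₀` with
probability `γ`. Given `(B, j)`, one step compares the Gaussian mixtures `(1 - γ) N_a + γ N_c` and
`(1 - γ) N_a + γ N_{c'}`, whose centers are pairwise at distance at most `2G / b`. In the
second-order expansion of the `α`-th moment of their density ratio the linear term integrates to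
`0`, and the remainder, of order `γ²`, is controlled by explicit Gaussian moments; the divergence
is at most `5 α γ² x` with `x = (2G / b)² / ν²`. Over `T` steps this adds up to `μ ε`, and passing
from Rényi to `(ε, δ)` privacy costs the remaining `(1 - μ) ε`.
-/

/-! ### Rényi divergence -/

theorem lintegral_withDensity_le_rpow_mul_rpow {X : Type*} [MeasurableSpace X] {α β : ℝ}
    (hαβ : α.HolderConjugate β) (N : Measure X) {p q : X → ℝ≥0∞} (hp : Measurable p)
    (hq : Measurable q) (hq₀ : ∀ x, q x ≠ 0) (hq_top : ∀ x, q x ≠ ∞) {f : X → ℝ≥0∞}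
    (hf : Measurable f) :
    ∫⁻ x, f x ∂N.withDensity p ≤
      (∫⁻ x, f x ^ β ∂N.withDensity q) ^ (1 / β) *
        (∫⁻ x, p x ^ α * q x ^ (1 - α) ∂N) ^ (1 / α) := by
  have hβ : 0 < β := hαβ.symm.pos
  have hexp : -(1 / β) * α = 1 - α := by
    rw [neg_mul, one_div_mul_eq_div, hαβ.div_conj_eq_sub_one, neg_sub]
  have hsplit (x : X) : p x * f x = (f x * q x ^ (1 / β)) * (p x * q x ^ (-(1 / β))) := by
    rw [mul_mul_mul_comm, ← ENNReal.rpow_add _ _ (hq₀ x) (hq_top x), add_neg_cancel,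
      ENNReal.rpow_zero, mul_one, mul_comm]
  have hfq (x : X) : (f x * q x ^ (1 / β)) ^ β = q x * f x ^ β := by
    rw [ENNReal.mul_rpow_of_nonneg _ _ hβ.le, ← ENNReal.rpow_mul, one_div_mul_cancel hβ.ne',
      ENNReal.rpow_one, mul_comm]
  have hpq (x : X) : (p x * q x ^ (-(1 / β))) ^ α = p x ^ α * q x ^ (1 - α) := by
    rw [ENNReal.mul_rpow_of_nonneg _ _ hαβ.nonneg, ← ENNReal.rpow_mul, hexp]
  rw [lintegral_withDensity_eq_lintegral_mul _ hp hf,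
    lintegral_withDensity_eq_lintegral_mul _ hq (hf.pow_const β)]
  simpa only [Pi.mul_apply, hsplit, hfq, hpq] using
    ENNReal.lintegral_mul_le_Lp_mul_Lq N hαβ.symm (hf.mul (hq.pow_const (1 / β))).aemeasurable
      (hp.mul (hq.pow_const (-(1 / β)))).aemeasurable

/-- `D_α(P ‖ Q) ≤ ρ`: the Rényi divergence of order `α` is at most `ρ`. By Hölder duality,
`∫ h dP ≤ e^{ρ/β} ‖h‖_{L^β(Q)}` for all `h ≥ 0`, where `β = α / (α - 1)`; this form avoids
densities, so that data processing, composition and quasi-convexity become monotonicity. -/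
def RenyiDivLE {X : Type*} [MeasurableSpace X] (α ρ : ℝ) (P Q : Measure X) : Prop :=
  ∀ h : X → ℝ≥0∞, Measurable h →
    (∫⁻ x, h x ∂P) ^ α.conjExponent ≤
      ENNReal.ofReal (Real.exp ρ) * ∫⁻ x, h x ^ α.conjExponent ∂Q

namespace RenyiDivLE

variable {X Y Z : Type*} [MeasurableSpace X] [MeasurableSpace Y] [MeasurableSpace Z]
  {α ρ ρ₁ ρ₂ : ℝ} {P Q : Measure X}

theorem of_withDensity (hα : 1 < α) (N : Measure X) {p q : X → ℝ≥0∞} (hp : Measurable p)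
    (hq : Measurable q) (hq₀ : ∀ x, q x ≠ 0) (hq_top : ∀ x, q x ≠ ∞)
    (h : ∫⁻ x, p x ^ α * q x ^ (1 - α) ∂N ≤ ENNReal.ofReal (Real.exp ((α - 1) * ρ))) :
    RenyiDivLE α ρ (N.withDensity p) (N.withDensity q) := by
  intro f hf
  have hαβ : α.HolderConjugate α.conjExponent := .conjExponent hα
  set β := α.conjExponent
  have hβ : 0 < β := hαβ.symm.pos
  have hβα : β / α = 1 / (α - 1) := by
    simp only [β, Real.conjExponent]; field_simp
  calc (∫⁻ x, f x ∂N.withDensity p) ^ β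
      ≤ ((∫⁻ x, f x ^ β ∂N.withDensity q) ^ (1 / β) *
          (∫⁻ x, p x ^ α * q x ^ (1 - α) ∂N) ^ (1 / α)) ^ β := by
        gcongr
        exact lintegral_withDensity_le_rpow_mul_rpow hαβ N hp hq hq₀ hq_top hf
    _ = (∫⁻ x, f x ^ β ∂N.withDensity q) *
          (∫⁻ x, p x ^ α * q x ^ (1 - α) ∂N) ^ (1 / (α - 1)) := by
        rw [ENNReal.mul_rpow_of_nonneg _ _ hβ.le, ← ENNReal.rpow_mul, ← ENNReal.rpow_mul,
          one_div_mul_cancel hβ.ne', ENNReal.rpow_one, one_div_mul_eq_div, hβα]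
    _ ≤ (∫⁻ x, f x ^ β ∂N.withDensity q) *
          ENNReal.ofReal (Real.exp ((α - 1) * ρ)) ^ (1 / (α - 1)) := by
        gcongr
    _ = ENNReal.ofReal (Real.exp ρ) * ∫⁻ x, f x ^ β ∂N.withDensity q := by
        rw [ENNReal.ofReal_rpow_of_pos (Real.exp_pos _), ← Real.exp_mul,
          mul_right_comm, mul_one_div_cancel (sub_pos.2 hα).ne', one_mul, mul_comm]

theorem refl (hα : 1 < α) (P : Measure X) [IsProbabilityMeasure P] : RenyiDivLE α 0 P P := by
  simpa using of_withDensity (ρ := 0) (p := 1) (q := 1) hα P measurable_one measurable_one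
    (by simp) (by simp) (by simp)

theorem map (h : RenyiDivLE α ρ P Q) {f : X → Y} (hf : Measurable f) :
    RenyiDivLE α ρ (P.map f) (Q.map f) := by
  intro g hg
  rw [lintegral_map hg hf, lintegral_map (hg.pow_const _) hf]
  exact h _ (hg.comp hf)

theorem prod_map_uncurry (h : RenyiDivLE α ρ₁ P Q) {M M' : Measure Y} [SFinite M] [SFinite M']
    {Φ Φ' : X → Y → Z} (hΦ : Measurable (Function.uncurry Φ))
    (hΦ' : Measurable (Function.uncurry Φ'))
    (hstep : ∀ x, RenyiDivLE α ρ₂ (M.map (Φ x)) (M'.map (Φ' x))) :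
    RenyiDivLE α (ρ₁ + ρ₂) ((P.prod M).map (Function.uncurry Φ))
      ((Q.prod M').map (Function.uncurry Φ')) := by
  intro g hg
  set β := α.conjExponent
  have hgβ : Measurable fun z => g z ^ β := hg.pow_const β
  have hgΦ : Measurable fun x => ∫⁻ y, g (Φ x y) ∂M :=
    (hg.comp hΦ).lintegral_prod_right'
  have hgΦ' : Measurable fun x => ∫⁻ y, g (Φ' x y) ^ β ∂M' :=
    (hgβ.comp hΦ').lintegral_prod_right'
  rw [lintegral_map hg hΦ, lintegral_map hgβ hΦ',
    lintegral_prod (fun z => g (Function.uncurry Φ z)) (hg.comp hΦ).aemeasurable,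
    lintegral_prod (fun z => g (Function.uncurry Φ' z) ^ β) (hgβ.comp hΦ').aemeasurable]
  calc (∫⁻ x, ∫⁻ y, g (Φ x y) ∂M ∂P) ^ β
      ≤ ENNReal.ofReal (Real.exp ρ₁) * ∫⁻ x, (∫⁻ y, g (Φ x y) ∂M) ^ β ∂Q := h _ hgΦ
    _ ≤ ENNReal.ofReal (Real.exp ρ₁) *
          ∫⁻ x, ENNReal.ofReal (Real.exp ρ₂) * ∫⁻ y, g (Φ' x y) ^ β ∂M' ∂Q := by
        gcongr with x
        have := hstep x g hg
        rwa [lintegral_map hg hΦ.of_uncurry_left, lintegral_map hgβ hΦ'.of_uncurry_left] at this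
    _ = ENNReal.ofReal (Real.exp (ρ₁ + ρ₂)) * ∫⁻ x, ∫⁻ y, g (Φ' x y) ^ β ∂M' ∂Q := by
        rw [lintegral_const_mul _ hgΦ', ← mul_assoc, Real.exp_add,
          ENNReal.ofReal_mul (Real.exp_pos _).le]

theorem sum_smul {ι : Type*} {s : Finset ι} {w : ι → ℝ≥0∞} {P Q : ι → Measure X} (hα : 1 < α)
    (hw : ∑ i ∈ s, w i = 1) (h : ∀ i ∈ s, RenyiDivLE α ρ (P i) (Q i)) :
    RenyiDivLE α ρ (∑ i ∈ s, w i • P i) (∑ i ∈ s, w i • Q i) := by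
  intro g hg
  set β := α.conjExponent
  have hβ : 1 < β := (Real.HolderConjugate.conjExponent hα).symm.lt
  simp only [lintegral_finsetSum_measure, lintegral_smul_measure, smul_eq_mul]
  calc (∑ i ∈ s, w i * ∫⁻ x, g x ∂P i) ^ β
      ≤ ∑ i ∈ s, w i * (∫⁻ x, g x ∂P i) ^ β :=
        ENNReal.rpow_arith_mean_le_arith_mean_rpow s w _ hw hβ.le
    _ ≤ ∑ i ∈ s, w i * (ENNReal.ofReal (Real.exp ρ) * ∫⁻ x, g x ^ β ∂Q i) := by
        gcongr with i hi
        exact h i hi g hg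
    _ = ENNReal.ofReal (Real.exp ρ) * ∑ i ∈ s, w i * ∫⁻ x, g x ^ β ∂Q i := by
        simp only [Finset.mul_sum, mul_left_comm]

theorem measure_le (h : RenyiDivLE α ρ P Q) (hα : 1 < α) {δ : ℝ} (hδ : 0 < δ) {s : Set X}
    (hs : MeasurableSet s) :
    P s ≤ ENNReal.ofReal (Real.exp (ρ + Real.log (1 / δ) / (α - 1))) * Q s +
      ENNReal.ofReal δ := by
  rcases le_or_gt (P s) (ENNReal.ofReal δ) with hsmall | hlarge
  · exact hsmall.trans le_add_self
  have hβ : α.conjExponent = 1 + 1 / (α - 1) := by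
    simp only [Real.conjExponent]; field_simp [(sub_pos.2 hα).ne']; ring
  have hα' : 0 < 1 / (α - 1) := one_div_pos.2 (sub_pos.2 hα)
  have hdual : P s ^ α.conjExponent ≤ ENNReal.ofReal (Real.exp ρ) * Q s := by
    have hind : (fun x => s.indicator 1 x ^ α.conjExponent) = s.indicator (1 : X → ℝ≥0∞) := by
      funext x
      by_cases hx : x ∈ s <;> simp [hx, (Real.HolderConjugate.conjExponent hα).symm.pos]
    simpa [hind, lintegral_indicator_one hs] using h (s.indicator 1) (measurable_one.indicator hs)
  have hcancel : ENNReal.ofReal (Real.exp (Real.log (1 / δ) / (α - 1))) *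
      ENNReal.ofReal δ ^ (1 / (α - 1)) = 1 := by
    rw [ENNReal.ofReal_rpow_of_pos hδ, ← ENNReal.ofReal_mul (Real.exp_pos _).le,
      Real.rpow_def_of_pos hδ, ← Real.exp_add, one_div δ, Real.log_inv, ENNReal.ofReal_eq_one,
      Real.exp_eq_one_iff]
    ring
  calc P s = ENNReal.ofReal (Real.exp (Real.log (1 / δ) / (α - 1))) *
        (P s * ENNReal.ofReal δ ^ (1 / (α - 1))) := by
        rw [mul_left_comm, hcancel, mul_one]
    _ ≤ ENNReal.ofReal (Real.exp (Real.log (1 / δ) / (α - 1))) *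
        (P s * P s ^ (1 / (α - 1))) := by gcongr
    _ = ENNReal.ofReal (Real.exp (Real.log (1 / δ) / (α - 1))) * P s ^ α.conjExponent := by
        rw [hβ, ENNReal.rpow_add_of_nonneg _ _ zero_le_one hα'.le, ENNReal.rpow_one]
    _ ≤ ENNReal.ofReal (Real.exp (Real.log (1 / δ) / (α - 1))) *
        (ENNReal.ofReal (Real.exp ρ) * Q s) := by gcongr
    _ = ENNReal.ofReal (Real.exp (ρ + Real.log (1 / δ) / (α - 1))) * Q s := by
        rw [← mul_assoc, ← ENNReal.ofReal_mul (Real.exp_pos _).le, ← Real.exp_add, add_comm]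
    _ ≤ _ := le_self_add

end RenyiDivLE

/-! ### Random recursions -/

/-- `w` is the random recursion `w (k + 1) = Φ k (w k) (ω k)` with initial state `w₀`, driven by
the coordinates of `ω`; only its first `T` steps are constrained. -/
structure IsRandomRecursion {S Y : Type*} {T : ℕ} (Φ : Fin T → S → Y → S) (w₀ : S)
    (w : ℕ → (Fin T → Y) → S) : Prop where
  zero : ∀ ω, w 0 ω = w₀
  succ : ∀ (k : Fin T) ω, w (k + 1) ω = Φ k (w k ω) (ω k)

theorem map_prodMk_eval_pi {ι S : Type*} [Fintype ι] [DecidableEq ι] [MeasurableSpace S]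
    {Y : ι → Type*} [∀ i, MeasurableSpace (Y i)] (M : ∀ i, Measure (Y i))
    [∀ i, IsProbabilityMeasure (M i)] {f : (∀ i, Y i) → S} (hf : Measurable f) (i : ι)
    (hfi : ∀ ω y, f (Function.update ω i y) = f ω) :
    (Measure.pi M).map (fun ω => (f ω, ω i)) = ((Measure.pi M).map f).prod (M i) := by
  refine Measure.ext_of_lintegral _ fun g hg => ?_
  have hg_marginal : Measurable fun s => ∫⁻ y, g (s, y) ∂M i := hg.lintegral_prod_right'
  have hfω : Measurable fun ω => (f ω, ω i) := hf.prodMk (measurable_pi_apply i)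
  rw [lintegral_map hg hfω, lintegral_prod _ hg.aemeasurable, lintegral_map hg_marginal hf]
  refine lintegral_eq_of_lmarginal_eq {i} (hg.comp hfω) (hg_marginal.comp hf) ?_
  funext ω
  simp only [lmarginal_singleton, hfi, Function.update_self, lintegral_const, measure_univ,
    mul_one]

namespace IsRandomRecursion

variable {S Y : Type*} {T : ℕ} {Φ Φ' : Fin T → S → Y → S} {w₀ : S} {w w' : ℕ → (Fin T → Y) → S}

theorem apply_update (hw : IsRandomRecursion Φ w₀ w) {k : ℕ} {j : Fin T} (hk : k ≤ j)
    (ω : Fin T → Y) (y : Y) : w k (Function.update ω j y) = w k ω := by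
  induction k with
  | zero => rw [hw.zero, hw.zero]
  | succ k ih =>
    let i : Fin T := ⟨k, by omega⟩
    have hij : i ≠ j := Fin.ne_of_lt hk
    rw [hw.succ i, hw.succ i, Function.update_of_ne hij, ih (Nat.le_of_succ_le hk)]

variable [MeasurableSpace S] [MeasurableSpace Y]

theorem measurable (hw : IsRandomRecursion Φ w₀ w)
    (hΦ : ∀ k, Measurable (Function.uncurry (Φ k))) {k : ℕ} (hk : k ≤ T) : Measurable (w k) := by
  induction k with
  | zero => simp only [funext hw.zero, measurable_const]
  | succ k ih =>
    rw [funext (hw.succ ⟨k, hk⟩)]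
    exact (hΦ ⟨k, hk⟩).comp ((ih (Nat.le_of_succ_le hk)).prodMk (measurable_pi_apply _))

variable {M : Fin T → Measure Y} [∀ k, IsProbabilityMeasure (M k)]

theorem map_succ (hw : IsRandomRecursion Φ w₀ w)
    (hΦ : ∀ k, Measurable (Function.uncurry (Φ k))) (k : Fin T) :
    (Measure.pi M).map (w (k + 1)) =
      (((Measure.pi M).map (w k)).prod (M k)).map (Function.uncurry (Φ k)) := by
  have hwk : Measurable (w k) := hw.measurable hΦ k.isLt.le
  rw [← map_prodMk_eval_pi M hwk k (hw.apply_update le_rfl),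
    Measure.map_map (hΦ k) (hwk.prodMk (measurable_pi_apply k)), funext (hw.succ k)]
  rfl

theorem renyiDivLE_map {α ρ : ℝ} (hα : 1 < α) (hw : IsRandomRecursion Φ w₀ w)
    (hw' : IsRandomRecursion Φ' w₀ w') (hΦ : ∀ k, Measurable (Function.uncurry (Φ k)))
    (hΦ' : ∀ k, Measurable (Function.uncurry (Φ' k)))
    (hstep : ∀ k s, RenyiDivLE α ρ ((M k).map (Φ k s)) ((M k).map (Φ' k s)))
    {k : ℕ} (hk : k ≤ T) :
    RenyiDivLE α (k * ρ) ((Measure.pi M).map (w k)) ((Measure.pi M).map (w' k)) := by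
  induction k with
  | zero =>
    simp only [funext hw.zero, funext hw'.zero, Measure.map_const, measure_univ, one_smul,
      Nat.cast_zero, zero_mul]
    exact .refl hα _
  | succ k ih =>
    rw [hw.map_succ hΦ ⟨k, hk⟩, hw'.map_succ hΦ' ⟨k, hk⟩, Nat.cast_succ, add_one_mul]
    exact (ih (Nat.le_of_succ_le hk)).prod_map_uncurry (hΦ _) (hΦ' _) (hstep _)

end IsRandomRecursion

/-! ### Second-order expansion of mixture moments -/

theorem rpow_le_quadratic_of_le_two {a t : ℝ} (ha : 1 ≤ a) (ha₂ : a ≤ 2) (ht : 0 ≤ t) :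
    t ^ a ≤ 1 + a * (t - 1) + (a - 1) * (t - 1) ^ 2 := by
  have hbernoulli : t ^ (a - 1) ≤ 1 + (a - 1) * (t - 1) := by
    simpa using rpow_one_add_le_one_add_mul_self (s := t - 1) (by linarith)
      (sub_nonneg.2 ha) (by linarith)
  calc t ^ a = t * t ^ (a - 1) := by
        rw [← Real.rpow_one_add' ht (by linarith), add_sub_cancel]
    _ ≤ t * (1 + (a - 1) * (t - 1)) := by gcongr
    _ = 1 + a * (t - 1) + (a - 1) * (t - 1) ^ 2 := by ring

theorem rpow_le_quadratic_of_two_le {a t M : ℝ} (ha : 2 ≤ a) (ht : 0 < t) (hM : 1 ≤ M)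
    (htM : t ≤ M) :
    t ^ a ≤ 1 + a * (t - 1) + a * (a - 1) / 2 * (t - 1) ^ 2 * M ^ (a - 2) := by
  rcases eq_or_ne 1 t with rfl | ht₁
  · simp
  have hpos {y : ℝ} (hy : y ∈ Set.uIcc 1 t) : 0 < y := (lt_min one_pos ht).trans_le hy.1
  have hcont : ContDiffOn ℝ (1 + 1) (fun y : ℝ => y ^ a) (Set.uIcc 1 t) := fun y hy =>
    (Real.contDiffAt_rpow_const_of_ne (hpos hy).ne').contDiffWithinAt
  obtain ⟨ξ, hξ, htaylor⟩ := taylor_mean_remainder_lagrange_iteratedDeriv (n := 1) ht₁ hcont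
  have hξ_pos : 0 < ξ := hpos (Set.uIoo_subset_uIcc_self hξ)
  have hξM : ξ ≤ M := hξ.2.le.trans (max_le hM htM)
  have hderiv : derivWithin (fun y : ℝ => y ^ a) (Set.uIcc 1 t) 1 = a := by
    have hd := Real.hasDerivAt_rpow_const (x := 1) (p := a) (Or.inl one_ne_zero)
    simpa using hd.hasDerivWithinAt.derivWithin
      (uniqueDiffOn_uIcc ht₁ 1 Set.left_mem_uIcc)
  have hderiv₂ : iteratedDeriv 2 (fun y : ℝ => y ^ a) ξ = a * (a - 1) * ξ ^ (a - 2) := by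
    rw [iteratedDeriv_eq_iterate, Real.iter_deriv_rpow_const]
    norm_num [descPochhammer_succ_right]
  norm_num [taylorWithinEval_succ, hderiv, hderiv₂] at htaylor
  have hξ_rpow : ξ ^ (a - 2) ≤ M ^ (a - 2) := by gcongr
  have hcoeff : 0 ≤ a * (a - 1) / 2 * (t - 1) ^ 2 := by
    have : 0 ≤ a - 1 := by linarith
    positivity
  linear_combination htaylor + mul_le_mul_of_nonneg_left hξ_rpow hcoeff

theorem one_add_rpow_le_exp_one_add {r y : ℝ} (hr : 0 ≤ r) (hy : 0 ≤ y) :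
    (1 + y) ^ r ≤ Real.exp 1 + ((r + 1) * y) ^ r := by
  rcases le_or_gt (r * y) 1 with hry | hry
  · have hexp : (1 + y) ^ r ≤ Real.exp 1 := by
      calc (1 + y) ^ r ≤ Real.exp y ^ r := by
            gcongr; linarith [Real.add_one_le_exp y]
        _ = Real.exp (r * y) := by rw [← Real.exp_mul, mul_comm]
        _ ≤ Real.exp 1 := Real.exp_le_exp.2 hry
    exact hexp.trans (le_add_of_nonneg_right (by positivity))
  · have hpow : (1 + y) ^ r ≤ ((r + 1) * y) ^ r := by
      gcongr; linarith
    exact hpow.trans (le_add_of_nonneg_left (Real.exp_pos 1).le)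

theorem exp_sub_exp_le {a b k : ℝ} (hak : a ≤ k) :
    Real.exp a - Real.exp b ≤ max (a - b) 0 * Real.exp k := by
  have htangent : Real.exp a - Real.exp b ≤ (a - b) * Real.exp a := by
    have := mul_le_mul_of_nonneg_right (Real.add_one_le_exp (b - a)) (Real.exp_pos a).le
    rw [← Real.exp_add, sub_add_cancel] at this
    linarith
  refine htangent.trans ?_
  gcongr
  exact le_max_left _ _

theorem exp_sub_two_mul_exp_add_exp_le {a b c k s : ℝ} (hak : a ≤ k) (hck : c ≤ k) (hs : 0 ≤ s)
    (hab : a - b ≤ s) (hcb : c - b ≤ s) (habc : a - 2 * b + c ≤ s) :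
    Real.exp a - 2 * Real.exp b + Real.exp c ≤ s * Real.exp k := by
  have hmax : max (a - b) 0 + max (c - b) 0 ≤ s := by
    rcases max_cases (a - b) 0 with h | h <;> rcases max_cases (c - b) 0 with h' | h' <;> linarith
  calc Real.exp a - 2 * Real.exp b + Real.exp c
      = (Real.exp a - Real.exp b) + (Real.exp c - Real.exp b) := by ring
    _ ≤ max (a - b) 0 * Real.exp k + max (c - b) 0 * Real.exp k :=
        add_le_add (exp_sub_exp_le hak) (exp_sub_exp_le hck)
    _ ≤ s * Real.exp k := by
        rw [← add_mul]; gcongr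

theorem rpow_mul_rpow_one_sub_le {α K p q c : ℝ} (hp : 0 < p) (hc : 0 < c) (hcq : c ≤ q)
    (hK : 0 ≤ K) (h : (p / q) ^ α ≤ 1 + α * (p / q - 1) + K * (p / q - 1) ^ 2) :
    p ^ α * q ^ (1 - α) ≤ q + α * (p - q) + K * (p - q) ^ 2 / c := by
  have hq : 0 < q := hc.trans_le hcq
  calc p ^ α * q ^ (1 - α) = q * (p / q) ^ α := by
        rw [Real.div_rpow hp.le hq.le, Real.rpow_sub hq, Real.rpow_one]; ring
    _ ≤ q * (1 + α * (p / q - 1) + K * (p / q - 1) ^ 2) := by gcongr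
    _ = q + α * (p - q) + K * (p - q) ^ 2 / q := by field_simp
    _ ≤ q + α * (p - q) + K * (p - q) ^ 2 / c := by gcongr

section Mixture

variable {α γ X Y : ℝ}

theorem mixture_rpow_mul_rpow_le_of_le_two (hα : 1 ≤ α) (hα₂ : α ≤ 2) (hγ₀ : 0 ≤ γ) (hγ : γ < 1)
    (hX : 0 ≤ X) (hY : 0 ≤ Y) :
    (1 - γ + γ * X) ^ α * (1 - γ + γ * Y) ^ (1 - α) ≤
      (1 - γ + γ * Y) + α * γ * (X - Y) + α * (α - 1) * γ ^ 2 / (1 - γ) * (X - Y) ^ 2 := by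
  have hγ' : 0 < 1 - γ := sub_pos.2 hγ
  have hα' : 0 ≤ α - 1 := sub_nonneg.2 hα
  refine (rpow_mul_rpow_one_sub_le (by positivity) hγ' (le_add_of_nonneg_right (by positivity))
    hα' (rpow_le_quadratic_of_le_two hα hα₂ (by positivity))).trans ?_
  have hcoeff : (α - 1) * γ ^ 2 / (1 - γ) ≤ α * ((α - 1) * γ ^ 2 / (1 - γ)) :=
    le_mul_of_one_le_left (by positivity) hα
  linear_combination (X - Y) ^ 2 * hcoeff

theorem mixture_rpow_mul_rpow_le_of_two_le (hα : 2 ≤ α) (hγ₀ : 0 ≤ γ) (hγ : γ < 1)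
    (hX : 0 ≤ X) (hY : 0 ≤ Y) :
    (1 - γ + γ * X) ^ α * (1 - γ + γ * Y) ^ (1 - α) ≤
      (1 - γ + γ * Y) + α * γ * (X - Y) + α * (α - 1) * γ ^ 2 / (1 - γ) *
        ((X - Y) ^ 2 * ((1 + γ / (1 - γ) * X) ^ (α - 2) / 2)) := by
  have hγ' : 0 < 1 - γ := sub_pos.2 hγ
  have hα' : 0 ≤ α - 1 := by linarith
  have hq : 1 - γ ≤ 1 - γ + γ * Y := le_add_of_nonneg_right (by positivity)
  have hratio : (1 - γ + γ * X) / (1 - γ + γ * Y) ≤ 1 + γ / (1 - γ) * X :=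
    calc (1 - γ + γ * X) / (1 - γ + γ * Y) ≤ (1 - γ + γ * X) / (1 - γ) := by gcongr
      _ = 1 + γ / (1 - γ) * X := by field_simp
  have htaylor := rpow_le_quadratic_of_two_le hα (by positivity)
    (le_add_of_nonneg_right (by positivity)) hratio
  refine (rpow_mul_rpow_one_sub_le (by positivity) hγ' hq
    (K := α * (α - 1) / 2 * (1 + γ / (1 - γ) * X) ^ (α - 2)) (by positivity)
    (by linear_combination htaylor)).trans_eq ?_
  ring

end Mixture

theorem subsampling_constant_le {r γ : ℝ} (hr : 0 ≤ r) (hγ₀ : 0 ≤ γ)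
    (hγr : γ * (5 / 2) * Real.exp (r + 2) ≤ 1) :
    ((r + 1) * (γ / (1 - γ))) ^ r * ((r + 1) * Real.exp ((r + 1) * (r + 2) / 3)) ≤
      Real.exp (2 / 3) := by
  have hγ_le : γ ≤ 1 / 5 := by nlinarith [Real.add_one_le_exp (r + 2)]
  have hγ' : 0 < 1 - γ := by linarith
  have hr_le : r + 1 ≤ 2 * Real.exp ((r - 1) / 2) := by
    linarith [Real.add_one_le_exp ((r - 1) / 2)]
  have hbase : (r + 1) * (γ / (1 - γ)) ≤ Real.exp (-(r + 5) / 2) := by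
    rw [← mul_div_assoc, div_le_iff₀ hγ']
    calc (r + 1) * γ ≤ 2 * Real.exp ((r - 1) / 2) * γ := by gcongr
      _ = 4 / 5 * (γ * (5 / 2) * Real.exp (r + 2)) * Real.exp (-(r + 5) / 2) := by
          rw [mul_assoc (4 / 5), mul_assoc (γ * _), ← Real.exp_add]; ring_nf
      _ ≤ 4 / 5 * 1 * Real.exp (-(r + 5) / 2) := by gcongr
      _ ≤ Real.exp (-(r + 5) / 2) * (1 - γ) := by
          linear_combination Real.exp (-(r + 5) / 2) * hγ_le
  calc ((r + 1) * (γ / (1 - γ))) ^ r * ((r + 1) * Real.exp ((r + 1) * (r + 2) / 3))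
      ≤ Real.exp (-(r + 5) / 2) ^ r * (Real.exp r * Real.exp ((r + 1) * (r + 2) / 3)) := by
        gcongr
        exact Real.add_one_le_exp r
    _ = Real.exp (2 / 3 - (r ^ 2 / 6 + r / 2)) := by
        rw [← Real.exp_mul, ← Real.exp_add, ← Real.exp_add]; ring_nf
    _ ≤ Real.exp (2 / 3) := Real.exp_le_exp.2 (sub_le_self _ (by positivity))

/- The weight `A + B * X ^ m` keeps the Gaussian moments of the remainder explicit. The bound on
its coefficients is the source of the constant `5` in the privacy cost of one step. -/
theorem exists_mixture_rpow_mul_rpow_le {α γ : ℝ} (hα : 1 ≤ α) (hγ₀ : 0 ≤ γ)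
    (hγα : γ * (5 / 2) * Real.exp α ≤ 1) :
    ∃ A B m : ℝ, 0 ≤ A ∧ 0 ≤ B ∧ 0 ≤ m ∧
      A * Real.exp (2 / 3) + B * ((m + 1) * Real.exp ((m + 1) * (m + 2) / 3)) ≤ 5 * (1 - γ) ∧
      ∀ X Y : ℝ, 0 ≤ X → 0 ≤ Y →
        (1 - γ + γ * X) ^ α * (1 - γ + γ * Y) ^ (1 - α) ≤
          (1 - γ + γ * Y) + α * γ * (X - Y) +
            α * (α - 1) * γ ^ 2 / (1 - γ) * ((X - Y) ^ 2 * (A + B * X ^ m)) := by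
  have hexp : Real.exp (2 / 3) ≤ 2 := by
    rw [← Real.le_log_iff_exp_le two_pos]; linarith [Real.log_two_gt_d9]
  have hexpα := Real.add_one_le_exp α
  have hγ : γ < 1 := by nlinarith
  rcases le_total α 2 with hα₂ | hα₂
  · refine ⟨1, 0, 0, zero_le_one, le_rfl, le_rfl, ?_, fun X Y hX hY => ?_⟩
    · nlinarith
    · simpa using mixture_rpow_mul_rpow_le_of_le_two hα hα₂ hγ₀ hγ hX hY
  · have hr : 0 ≤ α - 2 := sub_nonneg.2 hα₂
    refine ⟨Real.exp 1 / 2, ((α - 2 + 1) * (γ / (1 - γ))) ^ (α - 2) / 2, α - 2, by positivity,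
      by positivity, hr, ?_, fun X Y hX hY => ?_⟩
    · have hconst := subsampling_constant_le hr hγ₀ (by rwa [sub_add_cancel])
      have hγ_le : γ ≤ 2 / 15 := by nlinarith
      nlinarith [Real.exp_one_lt_d9, Real.exp_pos 1]
    · refine (mixture_rpow_mul_rpow_le_of_two_le hα₂ hγ₀ hγ hX hY).trans ?_
      have : 0 ≤ α - 1 := by linarith
      have hpow := one_add_rpow_le_exp_one_add hr (by positivity : 0 ≤ γ / (1 - γ) * X)
      rw [← mul_assoc, Real.mul_rpow (by positivity) hX] at hpow
      gcongr
      linarith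

/-! ### Gaussian noise -/

section GaussianShift

variable {E : Type*} [NormedAddCommGroup E] [InnerProductSpace ℝ E]

/-- The density at `z` of the translate by `u` of a centered Gaussian of variance `v` in each
direction, with respect to that Gaussian. -/
noncomputable def shiftDensity (v : ℝ) (u z : E) : ℝ :=
  Real.exp (inner ℝ z u / v - ‖u‖ ^ 2 / (2 * v))

theorem shiftDensity_pos (v : ℝ) (u z : E) : 0 < shiftDensity v u z := Real.exp_pos _

theorem shiftDensity_rpow_mul_rpow (v a b : ℝ) (u u' z : E) :
    shiftDensity v u z ^ a * shiftDensity v u' z ^ b =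
      Real.exp (a * (a - 1) / 2 * (‖u‖ ^ 2 / v) + b * (b - 1) / 2 * (‖u'‖ ^ 2 / v) +
        a * b * (inner ℝ u u' / v)) * shiftDensity v (a • u + b • u') z := by
  simp only [shiftDensity, ← Real.exp_mul, ← Real.exp_add, inner_add_right,
    real_inner_smul_right, norm_add_sq_real, norm_smul, real_inner_smul_left, mul_pow,
    Real.norm_eq_abs, sq_abs]
  ring_nf

theorem sq_sub_mul_rpow_shiftDensity (v m : ℝ) (u u' z : E) :
    (shiftDensity v u z - shiftDensity v u' z) ^ 2 * shiftDensity v u z ^ m =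
      shiftDensity v u z ^ (m + 2) * shiftDensity v u' z ^ (0 : ℝ) -
        2 * (shiftDensity v u z ^ (m + 1) * shiftDensity v u' z ^ (1 : ℝ)) +
        shiftDensity v u z ^ m * shiftDensity v u' z ^ (2 : ℝ) := by
  rw [Real.rpow_add (shiftDensity_pos v u z), Real.rpow_add_one (shiftDensity_pos v u z).ne',
    Real.rpow_zero, Real.rpow_one, Real.rpow_two, Real.rpow_two]
  ring

variable [MeasurableSpace E]

@[fun_prop]
theorem measurable_shiftDensity [OpensMeasurableSpace E] (v : ℝ) (u : E) :
    Measurable (shiftDensity v u) := by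
  have : Continuous (shiftDensity v u) := by unfold shiftDensity; fun_prop
  exact this.measurable

/-- `N` satisfies the Cameron–Martin formula of the centered Gaussian of variance `v` in each
direction. This is the only property of the noise on which the privacy analysis depends. -/
def HasGaussianShift (N : Measure E) (v : ℝ) : Prop :=
  ∀ u : E, N.map (u + ·) = N.withDensity fun z => ENNReal.ofReal (shiftDensity v u z)

namespace HasGaussianShift

variable [BorelSpace E] {N : Measure E} {v α γ x : ℝ}

theorem withDensity_mixture (hN : HasGaussianShift N v) (hγ₀ : 0 ≤ γ) (hγ₁ : γ ≤ 1) (u : E) :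
    N.withDensity (fun z => ENNReal.ofReal (1 - γ + γ * shiftDensity v u z)) =
      ENNReal.ofReal (1 - γ) • N + ENNReal.ofReal γ • N.map (u + ·) := by
  have hdens (z : E) : ENNReal.ofReal (1 - γ + γ * shiftDensity v u z) =
      ENNReal.ofReal (1 - γ) + ENNReal.ofReal γ * ENNReal.ofReal (shiftDensity v u z) := by
    rw [ENNReal.ofReal_add (sub_nonneg.2 hγ₁) (mul_nonneg hγ₀ (shiftDensity_pos v u z).le),
      ENNReal.ofReal_mul hγ₀]
  simp only [hdens]
  rw [hN u, ← withDensity_const, ← withDensity_smul _ (by fun_prop),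
    ← withDensity_add_left (by fun_prop)]
  rfl

variable [IsProbabilityMeasure N]

theorem lintegral_shiftDensity (hN : HasGaussianShift N v) (u : E) :
    ∫⁻ z, ENNReal.ofReal (shiftDensity v u z) ∂N = 1 := by
  rw [← setLIntegral_univ, ← withDensity_apply _ .univ, ← hN u,
    Measure.map_apply (measurable_const_add u) .univ, Set.preimage_univ, measure_univ]

theorem integrable_shiftDensity (hN : HasGaussianShift N v) (u : E) :
    Integrable (shiftDensity v u) N := by
  refine ⟨(measurable_shiftDensity v u).aestronglyMeasurable, ?_⟩
  rw [hasFiniteIntegral_iff_ofReal (ae_of_all _ fun z => (shiftDensity_pos v u z).le),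
    hN.lintegral_shiftDensity]
  exact ENNReal.one_lt_top

theorem integral_shiftDensity (hN : HasGaussianShift N v) (u : E) :
    ∫ z, shiftDensity v u z ∂N = 1 := by
  rw [integral_eq_lintegral_of_nonneg_ae (ae_of_all _ fun z => (shiftDensity_pos v u z).le)
    (measurable_shiftDensity v u).aestronglyMeasurable, hN.lintegral_shiftDensity,
    ENNReal.toReal_one]

theorem integrable_rpow_mul_rpow (hN : HasGaussianShift N v) (u u' : E) (a b : ℝ) :
    Integrable (fun z => shiftDensity v u z ^ a * shiftDensity v u' z ^ b) N := by
  simp only [shiftDensity_rpow_mul_rpow]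
  exact (hN.integrable_shiftDensity _).const_mul _

theorem integral_rpow_mul_rpow (hN : HasGaussianShift N v) (u u' : E) (a b : ℝ) :
    ∫ z, shiftDensity v u z ^ a * shiftDensity v u' z ^ b ∂N =
      Real.exp (a * (a - 1) / 2 * (‖u‖ ^ 2 / v) + b * (b - 1) / 2 * (‖u'‖ ^ 2 / v) +
        a * b * (inner ℝ u u' / v)) := by
  simp only [shiftDensity_rpow_mul_rpow, integral_const_mul, hN.integral_shiftDensity, mul_one]

theorem integrable_sq_sub_mul_rpow (hN : HasGaussianShift N v) (u u' : E) (m : ℝ) :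
    Integrable (fun z => (shiftDensity v u z - shiftDensity v u' z) ^ 2 *
      shiftDensity v u z ^ m) N := by
  simp only [sq_sub_mul_rpow_shiftDensity]
  exact ((hN.integrable_rpow_mul_rpow u u' (m + 2) 0).sub
    ((hN.integrable_rpow_mul_rpow u u' (m + 1) 1).const_mul 2)).add
    (hN.integrable_rpow_mul_rpow u u' m 2)

theorem integral_sq_sub_mul_rpow_le (hN : HasGaussianShift N v) (hv : 0 < v) {u u' : E}
    {m : ℝ} (hm : 0 ≤ m) (hu : ‖u‖ ^ 2 / v ≤ x) (hu' : ‖u'‖ ^ 2 / v ≤ x)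
    (huu' : ‖u - u'‖ ^ 2 / v ≤ x) :
    ∫ z, (shiftDensity v u z - shiftDensity v u' z) ^ 2 * shiftDensity v u z ^ m ∂N ≤
      (m + 1) * x * Real.exp ((m + 1) * (m + 2) * x / 2) := by
  have hint₀ := hN.integrable_rpow_mul_rpow u u' (m + 2) 0
  have hint₁ := (hN.integrable_rpow_mul_rpow u u' (m + 1) 1).const_mul 2
  have hint₂ := hN.integrable_rpow_mul_rpow u u' m 2
  have hA : 0 ≤ ‖u‖ ^ 2 / v := by positivity
  have hB : 0 ≤ ‖u'‖ ^ 2 / v := by positivity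
  have hx : 0 ≤ x := hA.trans hu
  have hsub : ‖u‖ ^ 2 / v - 2 * (inner ℝ u u' / v) + ‖u'‖ ^ 2 / v ≤ x := by
    rw [norm_sub_sq_real] at huu'
    exact huu'.trans_eq' (by ring)
  have hadd : 2 * (inner ℝ u u' / v) ≤ ‖u‖ ^ 2 / v + ‖u'‖ ^ 2 / v := by
    have : 0 ≤ ‖u - u'‖ ^ 2 / v := by positivity
    rw [norm_sub_sq_real] at this
    exact sub_nonneg.1 (this.trans_eq (by ring))
  have hint₀₁ : Integrable (fun z => shiftDensity v u z ^ (m + 2) * shiftDensity v u' z ^ (0 : ℝ) -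
      2 * (shiftDensity v u z ^ (m + 1) * shiftDensity v u' z ^ (1 : ℝ))) N := hint₀.sub hint₁
  simp only [sq_sub_mul_rpow_shiftDensity]
  rw [integral_add hint₀₁ hint₂, integral_sub hint₀ hint₁, integral_const_mul,
    hN.integral_rpow_mul_rpow, hN.integral_rpow_mul_rpow, hN.integral_rpow_mul_rpow]
  generalize ‖u‖ ^ 2 / v = A at *
  generalize ‖u'‖ ^ 2 / v = B at *
  generalize inner ℝ u u' / v = c at *
  have hmA := mul_le_mul_of_nonneg_left hu hm
  have hmmA := mul_le_mul_of_nonneg_left hmA hm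
  have hm_add := mul_le_mul_of_nonneg_left hadd hm
  have hm_sub := mul_le_mul_of_nonneg_left hsub hm
  have hmB := mul_le_mul_of_nonneg_left hu' hm
  refine exp_sub_two_mul_exp_add_exp_le ?_ ?_ (by positivity) ?_ ?_ ?_
  all_goals nlinarith

theorem integrable_sq_sub_mul_add_rpow (hN : HasGaussianShift N v)
    (u u' : E) (A B m : ℝ) :
    Integrable (fun z => (shiftDensity v u z - shiftDensity v u' z) ^ 2 *
      (A + B * shiftDensity v u z ^ m)) N := by
  refine (((hN.integrable_sq_sub_mul_rpow u u' 0).const_mul A).add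
    ((hN.integrable_sq_sub_mul_rpow u u' m).const_mul B)).congr (ae_of_all _ fun z => ?_)
  simp only [Pi.add_apply, Real.rpow_zero]
  ring

theorem integral_sq_sub_mul_add_rpow_le (hN : HasGaussianShift N v)
    (hv : 0 < v) {u u' : E} {A B m : ℝ} (hA : 0 ≤ A) (hB : 0 ≤ B) (hm : 0 ≤ m) (hx : x ≤ 2 / 3)
    (hu : ‖u‖ ^ 2 / v ≤ x) (hu' : ‖u'‖ ^ 2 / v ≤ x) (huu' : ‖u - u'‖ ^ 2 / v ≤ x) :
    ∫ z, (shiftDensity v u z - shiftDensity v u' z) ^ 2 * (A + B * shiftDensity v u z ^ m) ∂N ≤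
      (A * Real.exp (2 / 3) + B * ((m + 1) * Real.exp ((m + 1) * (m + 2) / 3))) * x := by
  have hx₀ : 0 ≤ x := (by positivity : 0 ≤ ‖u‖ ^ 2 / v).trans hu
  have hmoment {r : ℝ} (hr : 0 ≤ r) :
      ∫ z, (shiftDensity v u z - shiftDensity v u' z) ^ 2 * shiftDensity v u z ^ r ∂N ≤
        (r + 1) * Real.exp ((r + 1) * (r + 2) / 3) * x := by
    refine (hN.integral_sq_sub_mul_rpow_le hv hr hu hu' huu').trans ?_
    rw [mul_right_comm]
    gcongr (r + 1) * Real.exp ?_ * x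
    nlinarith [mul_nonneg hr hr]
  have hexpand (z : E) : (shiftDensity v u z - shiftDensity v u' z) ^ 2 *
      (A + B * shiftDensity v u z ^ m) =
      A * ((shiftDensity v u z - shiftDensity v u' z) ^ 2 * shiftDensity v u z ^ (0 : ℝ)) +
      B * ((shiftDensity v u z - shiftDensity v u' z) ^ 2 * shiftDensity v u z ^ m) := by
    rw [Real.rpow_zero]; ring
  simp only [hexpand]
  rw [integral_add ((hN.integrable_sq_sub_mul_rpow u u' 0).const_mul A)
    ((hN.integrable_sq_sub_mul_rpow u u' m).const_mul B), integral_const_mul, integral_const_mul]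
  have h₀ := mul_le_mul_of_nonneg_left (hmoment le_rfl) hA
  have hₘ := mul_le_mul_of_nonneg_left (hmoment hm) hB
  rw [zero_add, one_mul, zero_add, one_mul] at h₀
  linarith

theorem lintegral_mixture_rpow_mul_rpow_le (hN : HasGaussianShift N v)
    (hv : 0 < v) {u u' : E} (hα : 1 ≤ α) (hγ₀ : 0 ≤ γ) (hγα : γ * (5 / 2) * Real.exp α ≤ 1)
    (hx : x ≤ 2 / 3) (hu : ‖u‖ ^ 2 / v ≤ x) (hu' : ‖u'‖ ^ 2 / v ≤ x)
    (huu' : ‖u - u'‖ ^ 2 / v ≤ x) :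
    ∫⁻ z, ENNReal.ofReal ((1 - γ + γ * shiftDensity v u z) ^ α *
        (1 - γ + γ * shiftDensity v u' z) ^ (1 - α)) ∂N ≤
      ENNReal.ofReal (Real.exp ((α - 1) * (5 * α * γ ^ 2 * x))) := by
  obtain ⟨A, B, m, hA, hB, hm, hAB, hpt⟩ := exists_mixture_rpow_mul_rpow_le hα hγ₀ hγα
  have hγ : 0 < 1 - γ := by nlinarith [Real.add_one_le_exp α]
  have hx₀ : 0 ≤ x := (by positivity : 0 ≤ ‖u‖ ^ 2 / v).trans hu
  have hpt' (z : E) := hpt _ _ (shiftDensity_pos v u z).le (shiftDensity_pos v u' z).le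
  have hpos (z : E) : 0 ≤ (1 - γ + γ * shiftDensity v u z) ^ α *
      (1 - γ + γ * shiftDensity v u' z) ^ (1 - α) := by
    have := shiftDensity_pos v u z
    have := shiftDensity_pos v u' z
    positivity
  have hR := (hN.integrable_sq_sub_mul_add_rpow u u' A B m).const_mul
    (α * (α - 1) * γ ^ 2 / (1 - γ))
  have hq : Integrable (fun z => 1 - γ + γ * shiftDensity v u' z) N :=
    (integrable_const _).add ((hN.integrable_shiftDensity u').const_mul γ)
  have hXY : Integrable (fun z => α * γ * (shiftDensity v u z - shiftDensity v u' z)) N :=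
    ((hN.integrable_shiftDensity u).sub (hN.integrable_shiftDensity u')).const_mul _
  have hlin : Integrable (fun z => 1 - γ + γ * shiftDensity v u' z +
      α * γ * (shiftDensity v u z - shiftDensity v u' z)) N := hq.add hXY
  have hlin_eq : ∫ z, (1 - γ + γ * shiftDensity v u' z) +
      α * γ * (shiftDensity v u z - shiftDensity v u' z) ∂N = 1 := by
    rw [integral_add hq hXY, integral_add (integrable_const _)
      ((hN.integrable_shiftDensity u').const_mul γ), integral_const_mul, integral_const_mul,
      integral_sub (hN.integrable_shiftDensity u) (hN.integrable_shiftDensity u'),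
      hN.integral_shiftDensity, hN.integral_shiftDensity]
    simp
  refine (lintegral_mono fun z => ENNReal.ofReal_le_ofReal (hpt' z)).trans ?_
  rw [← ofReal_integral_eq_lintegral_ofReal (f := fun z => _ + _) (hlin.add hR)
    (ae_of_all _ fun z => (hpos z).trans (hpt' z))]
  refine ENNReal.ofReal_le_ofReal ?_
  rw [integral_add hlin hR, hlin_eq, integral_const_mul]
  calc _ ≤ 1 + α * (α - 1) * γ ^ 2 / (1 - γ) * (5 * (1 - γ) * x) := by
        gcongr
        exact (hN.integral_sq_sub_mul_add_rpow_le hv hA hB hm hx hu hu' huu').trans (by gcongr)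
    _ = (α - 1) * (5 * α * γ ^ 2 * x) + 1 := by field_simp; ring
    _ ≤ _ := Real.add_one_le_exp _

theorem renyiDivLE_mixture (hN : HasGaussianShift N v) (hv : 0 < v)
    {a c c' : E} (hα : 1 < α) (hγ₀ : 0 ≤ γ) (hγα : γ * (5 / 2) * Real.exp α ≤ 1) (hx : x ≤ 2 / 3)
    (hc : ‖c - a‖ ^ 2 / v ≤ x) (hc' : ‖c' - a‖ ^ 2 / v ≤ x) (hcc' : ‖c - c'‖ ^ 2 / v ≤ x) :
    RenyiDivLE α (5 * α * γ ^ 2 * x)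
      (ENNReal.ofReal (1 - γ) • N.map (a + ·) + ENNReal.ofReal γ • N.map (c + ·))
      (ENNReal.ofReal (1 - γ) • N.map (a + ·) + ENNReal.ofReal γ • N.map (c' + ·)) := by
  have hγ : γ < 1 := by nlinarith [Real.add_one_le_exp α]
  have hpos (u z : E) : 0 < 1 - γ + γ * shiftDensity v u z := by
    have := shiftDensity_pos v u z
    have := sub_pos.2 hγ
    positivity
  have htranslate (c : E) :
      ENNReal.ofReal (1 - γ) • N.map (a + ·) + ENNReal.ofReal γ • N.map (c + ·) =
      (N.withDensity fun z =>
        ENNReal.ofReal (1 - γ + γ * shiftDensity v (c - a) z)).map (a + ·) := by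
    rw [hN.withDensity_mixture hγ₀ hγ.le, Measure.map_add _ _ (by fun_prop), Measure.map_smul,
      Measure.map_smul, Measure.map_map (by fun_prop) (by fun_prop)]
    simp [Function.comp_def, ← add_assoc]
  rw [htranslate, htranslate]
  refine RenyiDivLE.map (RenyiDivLE.of_withDensity hα N (by fun_prop) (by fun_prop)
    (fun z => by simpa using hpos _ z) (fun z => ENNReal.ofReal_ne_top) ?_) (by fun_prop)
  refine le_of_eq_of_le (lintegral_congr fun z => ?_) (hN.lintegral_mixture_rpow_mul_rpow_le hv
    hα.le hγ₀ hγα hx hc hc' (by rwa [sub_sub_sub_cancel_right]))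
  rw [ENNReal.ofReal_rpow_of_pos (hpos _ z), ENNReal.ofReal_rpow_of_pos (hpos _ z),
    ENNReal.ofReal_mul (Real.rpow_nonneg (hpos _ z).le _)]

end HasGaussianShift

end GaussianShift

section Noise

theorem pi_withDensity {ι : Type*} [Fintype ι] {X : ι → Type*} [∀ i, MeasurableSpace (X i)]
    (μ : ∀ i, Measure (X i)) [∀ i, IsProbabilityMeasure (μ i)] {g : ∀ i, X i → ℝ≥0∞}
    (hg : ∀ i, Measurable (g i)) [∀ i, SigmaFinite ((μ i).withDensity (g i))] :
    Measure.pi (fun i => (μ i).withDensity (g i)) =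
      (Measure.pi μ).withDensity fun x => ∏ i, g i (x i) := by
  refine Measure.pi_eq fun s hs => ?_
  have hind (x : ∀ i, X i) : (Set.univ.pi s).indicator (fun x => ∏ i, g i (x i)) x =
      ∏ i, (s i).indicator (g i) (x i) := by
    by_cases hx : x ∈ Set.univ.pi s
    · rw [Set.indicator_of_mem hx]
      exact Finset.prod_congr rfl fun i _ => (Set.indicator_of_mem (hx i trivial) _).symm
    · rw [Set.indicator_of_notMem hx]
      simp only [Set.mem_pi, Set.mem_univ, true_imp_iff, not_forall] at hx
      obtain ⟨i, hi⟩ := hx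
      exact (Finset.prod_eq_zero (Finset.mem_univ i) (Set.indicator_of_notMem hi _)).symm
  have hmeas (i : ι) : Measurable ((s i).indicator (g i)) := (hg i).indicator (hs i)
  rw [withDensity_apply _ (.univ_pi hs), ← lintegral_indicator (.univ_pi hs),
    lintegral_congr hind, lintegral_prod_eq_prod_lintegral_of_indepFun Finset.univ
      (fun i (x : ∀ i, X i) => (s i).indicator (g i) (x i))
      (iIndepFun_pi fun i => (hmeas i).aemeasurable)
      fun i => (hmeas i).comp (measurable_pi_apply i)]
  refine Finset.prod_congr rfl fun i _ => ?_
  rw [withDensity_apply _ (hs i), ← lintegral_indicator (hs i),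
    (measurePreserving_eval μ i).lintegral_comp (hmeas i)]

theorem map_withDensity_comp {X Y : Type*} [MeasurableSpace X] [MeasurableSpace Y]
    (μ : Measure X) {f : X → Y} (hf : Measurable f) {g : Y → ℝ≥0∞} (hg : Measurable g) :
    (μ.withDensity (g ∘ f)).map f = (μ.map f).withDensity g := by
  ext s hs
  rw [Measure.map_apply hf hs, withDensity_apply _ (hf hs), withDensity_apply _ hs,
    setLIntegral_map hs hg hf]
  rfl

theorem hasGaussianShift_gaussianReal {v : ℝ≥0} (hv : v ≠ 0) :
    HasGaussianShift (gaussianReal 0 v) v := by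
  intro u
  have hv' : (v : ℝ) ≠ 0 := by exact_mod_cast hv
  rw [gaussianReal_map_const_add, zero_add, gaussianReal_of_var_ne_zero _ hv,
    gaussianReal_of_var_ne_zero _ hv,
    ← withDensity_mul _ (measurable_gaussianPDF 0 v) (by fun_prop)]
  congr 1
  ext x
  rw [Pi.mul_apply, gaussianPDF, gaussianPDF, ← ENNReal.ofReal_mul (gaussianPDFReal_nonneg _ _ _),
    gaussianPDFReal, gaussianPDFReal, shiftDensity, mul_assoc _ (Real.exp _), ← Real.exp_add,
    RCLike.inner_apply, conj_trivial, Real.norm_eq_abs, sq_abs]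
  congr 3
  field_simp
  ring

theorem shiftDensity_eq_prod {ι : Type*} [Fintype ι] (v : ℝ) (u z : EuclideanSpace ℝ ι) :
    shiftDensity v u z = ∏ i, shiftDensity v (u i) (z i) := by
  simp only [shiftDensity, ← Real.exp_sum, Finset.sum_sub_distrib, ← Finset.sum_div,
    EuclideanSpace.norm_sq_eq, PiLp.inner_apply]

theorem HasGaussianShift.map_toLp_pi {ι : Type*} [Fintype ι] {N : ι → Measure ℝ}
    [∀ i, IsProbabilityMeasure (N i)] {v : ℝ} (hN : ∀ i, HasGaussianShift (N i) v) :
    HasGaussianShift ((Measure.pi N).map (WithLp.toLp 2)) v := by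
  intro u
  have hsigma (i : ι) : SigmaFinite ((N i).withDensity fun t =>
      ENNReal.ofReal (shiftDensity v (u i) t)) := by
    rw [← hN i (u i)]; infer_instance
  have hprod (x : ι → ℝ) : ENNReal.ofReal (shiftDensity v u (WithLp.toLp 2 x)) =
      ∏ i, ENNReal.ofReal (shiftDensity v (u i) (x i)) := by
    rw [shiftDensity_eq_prod, ENNReal.ofReal_prod_of_nonneg fun i _ => (shiftDensity_pos _ _ _).le]
  calc ((Measure.pi N).map (WithLp.toLp 2)).map (u + ·)
      = ((Measure.pi N).map fun x i => u i + x i).map (WithLp.toLp 2) := by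
        rw [Measure.map_map (by fun_prop) (by fun_prop),
          Measure.map_map (by fun_prop) (by fun_prop)]
        rfl
    _ = (Measure.pi fun i => (N i).map (u i + ·)).map (WithLp.toLp 2) := by
        rw [Measure.pi_map_pi (f := fun i t => u i + t) fun i => by fun_prop]
    _ = ((Measure.pi N).withDensity fun x => ∏ i, ENNReal.ofReal (shiftDensity v (u i) (x i))).map
          (WithLp.toLp 2) := by
        rw [funext fun i => hN i (u i), pi_withDensity _ fun i => by fun_prop]
    _ = ((Measure.pi N).map (WithLp.toLp 2)).withDensity
          fun z => ENNReal.ofReal (shiftDensity v u z) := by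
        rw [← map_withDensity_comp _ (by fun_prop) (by fun_prop), Function.comp_def,
          funext hprod]

instance isProbabilityMeasure_noiseMeasure (d : ℕ) (ν : ℝ) :
    IsProbabilityMeasure (noiseMeasure d ν) :=
  Measure.isProbabilityMeasure_map (by fun_prop)

theorem hasGaussianShift_noiseMeasure (d : ℕ) {ν : ℝ} (hν : 0 < ν ^ 2) :
    HasGaussianShift (noiseMeasure d ν) (ν ^ 2) := by
  have hN := hasGaussianShift_gaussianReal (Real.toNNReal_pos.2 hν).ne'
  rw [Real.coe_toNNReal _ hν.le] at hN
  exact HasGaussianShift.map_toLp_pi fun _ => hN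

end Noise

/-! ### Subsampling -/

section Subsampling

open Finset

variable {ι : Type*} [Fintype ι] [DecidableEq ι] {b : ℕ}

/-- The pairs of a size-`b` set `B` avoiding `i₀` and an element `j ∈ B`; swapping `j` for `i₀`
in `B` gives a size-`b` set that contains `i₀`. -/
def swapPairs (b : ℕ) (i₀ : ι) : Finset (Σ _ : Finset ι, ι) :=
  ((powersetCard b univ).filter (i₀ ∉ ·)).sigma fun B => B

theorem mem_swapPairs {i₀ : ι} {p : Σ _ : Finset ι, ι} :
    p ∈ swapPairs b i₀ ↔ (#p.1 = b ∧ i₀ ∉ p.1) ∧ p.2 ∈ p.1 := by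
  simp [swapPairs]

theorem sum_swapPairs_swap {M : Type*} [AddCommMonoid M] (i₀ : ι) (F : Finset ι → M) :
    ∑ p ∈ swapPairs b i₀, F (insert i₀ (p.1.erase p.2)) =
      (Fintype.card ι - b) • ∑ B ∈ powersetCard b univ with i₀ ∈ B, F B := by
  have hconst : ∀ B ∈ (powersetCard b univ).filter (i₀ ∈ ·),
      (Fintype.card ι - b) • F B = ∑ _j ∈ Bᶜ, F B := by
    intro B hB
    rw [sum_const, card_compl, (mem_powersetCard.1 (mem_filter.1 hB).1).2]
  rw [smul_sum, sum_congr rfl hconst, sum_sigma']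
  refine sum_bij' (fun p _ => ⟨insert i₀ (p.1.erase p.2), p.2⟩)
    (fun p _ => ⟨insert p.2 (p.1.erase i₀), p.2⟩) ?_ ?_ ?_ ?_ fun _ _ => rfl
  · rintro ⟨B, j⟩ h
    obtain ⟨⟨hB, hi⟩, hj⟩ := mem_swapPairs.1 h
    have hne : j ≠ i₀ := ne_of_mem_of_not_mem hj hi
    simp [card_insert_of_notMem, card_erase_add_one hj, hi, hB, hne]
  · rintro ⟨B, j⟩ h
    simp only [mem_sigma, mem_filter, mem_powersetCard_univ, mem_compl] at h
    obtain ⟨⟨hB, hi⟩, hj⟩ := h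
    have hne : i₀ ≠ j := ne_of_mem_of_not_mem hi hj
    simp [mem_swapPairs, card_insert_of_notMem, card_erase_add_one hi, hj, hB, hne]
  · rintro ⟨B, j⟩ h
    obtain ⟨⟨-, hi⟩, hj⟩ := mem_swapPairs.1 h
    simp [hi, insert_erase hj]
  · rintro ⟨B, j⟩ h
    simp only [mem_sigma, mem_filter, mem_compl] at h
    simp [h.2, insert_erase h.1.2]

theorem sum_swapPairs_mixture {M : Type*} [AddCommMonoid M] [Module ℝ≥0∞ M]
    (hb : b ≤ Fintype.card ι) (i₀ : ι) (F : Finset ι → M) :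
    ∑ p ∈ swapPairs b i₀, (ENNReal.ofReal (1 - (b : ℝ) / Fintype.card ι) • F p.1 +
        ENNReal.ofReal ((b : ℝ) / Fintype.card ι) • F (insert i₀ (p.1.erase p.2))) =
      ENNReal.ofReal (b * (1 - (b : ℝ) / Fintype.card ι)) •
        ∑ B ∈ powersetCard b univ, F B := by
  have hcard : (0 : ℝ) < Fintype.card ι := by exact_mod_cast Fintype.card_pos_iff.2 ⟨i₀⟩
  have hfst : ∑ p ∈ swapPairs b i₀, F p.1 = b • ∑ B ∈ powersetCard b univ with i₀ ∉ B, F B := by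
    rw [swapPairs, sum_sigma, smul_sum]
    refine sum_congr rfl fun B hB => ?_
    rw [← (mem_powersetCard.1 (mem_filter.1 hB).1).2]
    exact sum_const (F B)
  rw [sum_add_distrib, ← smul_sum, ← smul_sum, hfst, sum_swapPairs_swap,
    ← sum_filter_add_sum_filter_not (powersetCard b univ) (i₀ ∈ ·) F, smul_add, add_comm,
    ← Nat.cast_smul_eq_nsmul ℝ≥0∞, ← Nat.cast_smul_eq_nsmul ℝ≥0∞, smul_smul, smul_smul,
    ← ENNReal.ofReal_natCast, ← ENNReal.ofReal_natCast, ← ENNReal.ofReal_mul (by positivity),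
    ← ENNReal.ofReal_mul' (by positivity), Nat.cast_sub hb]
  congr 3 <;> field_simp

theorem card_swapPairs (hb : b ≤ Fintype.card ι) (i₀ : ι) :
    (#(swapPairs b i₀) : ℝ≥0∞) = ENNReal.ofReal (b * (1 - (b : ℝ) / Fintype.card ι)) *
      #(powersetCard b (univ : Finset ι)) := by
  have hfrac : (b : ℝ) / Fintype.card ι ≤ 1 := div_le_one_of_le₀ (by exact_mod_cast hb) (by simp)
  have h := sum_swapPairs_mixture hb i₀ fun _ => (1 : ℝ≥0∞)
  rw [sum_const, sum_const, ← add_smul, ← ENNReal.ofReal_add (sub_nonneg.2 hfrac) (by positivity),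
    sub_add_cancel, ENNReal.ofReal_one, one_smul] at h
  simpa using h

theorem inv_card_smul_sum_powersetCard {M : Type*} [AddCommMonoid M] [Module ℝ≥0∞ M]
    (hb₀ : 0 < b) (hb : b < Fintype.card ι) (i₀ : ι) (F : Finset ι → M) :
    (#(powersetCard b (univ : Finset ι)) : ℝ≥0∞)⁻¹ • ∑ B ∈ powersetCard b univ, F B =
      ∑ p ∈ swapPairs b i₀, (#(swapPairs b i₀) : ℝ≥0∞)⁻¹ •
        (ENNReal.ofReal (1 - (b : ℝ) / Fintype.card ι) • F p.1 +
          ENNReal.ofReal ((b : ℝ) / Fintype.card ι) • F (insert i₀ (p.1.erase p.2))) := by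
  have hpos : 0 < b * (1 - (b : ℝ) / Fintype.card ι) :=
    mul_pos (by exact_mod_cast hb₀) (sub_pos.2 (by rw [div_lt_one] <;> norm_cast; lia))
  rw [← smul_sum, sum_swapPairs_mixture hb.le, smul_smul, card_swapPairs hb.le,
    ENNReal.mul_inv (.inl (ENNReal.ofReal_pos.2 hpos).ne') (.inl ENNReal.ofReal_ne_top),
    mul_right_comm, ENNReal.inv_mul_cancel (ENNReal.ofReal_pos.2 hpos).ne' ENNReal.ofReal_ne_top,
    one_mul]

theorem swapPairs_nonempty (hb₀ : 0 < b) (hb : b < Fintype.card ι) (i₀ : ι) :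
    (swapPairs b i₀).Nonempty := by
  obtain ⟨B, hB, hcard⟩ := exists_subset_card_eq (s := univ.erase i₀) (n := b)
    (by rw [card_erase_of_mem (mem_univ _), card_univ]; lia)
  obtain ⟨j, hj⟩ := card_pos.1 (hb₀.trans_eq hcard.symm)
  exact ⟨⟨B, j⟩, mem_swapPairs.2 ⟨⟨hcard, fun h => notMem_erase _ _ (hB h)⟩, hj⟩⟩

theorem isProbabilityMeasure_batchMeasure {n : ℕ} (hb : b ≤ n) :
    IsProbabilityMeasure (batchMeasure n b) := by
  have hne : (powersetCard b (univ : Finset (Fin n))).Nonempty := by simpa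
  refine ⟨?_⟩
  simp only [batchMeasure, Measure.smul_apply, Measure.finsetSum_apply, measure_univ, sum_const,
    smul_eq_mul, nsmul_eq_mul, mul_one]
  exact ENNReal.inv_mul_cancel (by exact_mod_cast hne.card_ne_zero) (ENNReal.natCast_ne_top _)

theorem map_batchMeasure_prod {n : ℕ} {E X : Type*} [MeasurableSpace E] [MeasurableSpace X]
    (N : Measure E) [SFinite N] {f : Finset (Fin n) → E → X} (hf : ∀ B, Measurable (f B)) :
    ((batchMeasure n b).prod N).map (Function.uncurry f) =
      (#(powersetCard b (univ : Finset (Fin n))) : ℝ≥0∞)⁻¹ •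
        ∑ B ∈ powersetCard b univ, N.map (f B) := by
  have hf' : Measurable (Function.uncurry f) := measurable_from_prod_countable_right hf
  ext s hs
  rw [Measure.map_apply hf' hs, Measure.prod_apply (hf' hs), batchMeasure,
    lintegral_smul_measure, lintegral_finsetSum_measure]
  simp [Measure.map_apply (hf _) hs, Set.preimage_preimage]

variable {n : ℕ} {E : Type*} [NormedAddCommGroup E] [InnerProductSpace ℝ E]

/-- The average of the gradients `g i` over a batch `B` of nominal size `b`. -/
noncomputable def batchMean (b : ℕ) (g : Fin n → E) (B : Finset (Fin n)) : E :=
  (b : ℝ)⁻¹ • ∑ i ∈ B, g i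

theorem batchMean_swap_sub (b : ℕ) (g : Fin n → E) {B : Finset (Fin n)} {i j : Fin n}
    (hi : i ∉ B) (hj : j ∈ B) :
    batchMean b g (insert i (B.erase j)) - batchMean b g B = (b : ℝ)⁻¹ • (g i - g j) := by
  rw [batchMean, batchMean, ← smul_sub, sum_insert fun h => hi (mem_of_mem_erase h),
    ← sum_erase_add B g hj]
  abel_nf

theorem norm_inv_natCast_smul_sub_le (b : ℕ) {G : ℝ} {u v : E} (hu : ‖u‖ ≤ G) (hv : ‖v‖ ≤ G) :
    ‖(b : ℝ)⁻¹ • (u - v)‖ ≤ 2 * G / b := by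
  rw [norm_smul, norm_inv, RCLike.norm_natCast, inv_mul_eq_div]
  gcongr
  linarith [norm_sub_le u v]

variable [MeasurableSpace E] [BorelSpace E]

theorem map_batchMean_add (hb₀ : 0 < b) (hb : b < n) (i₀ : Fin n) (N : Measure E) [SFinite N]
    (g : Fin n → E) :
    ((batchMeasure n b).prod N).map (fun y => batchMean b g y.1 + y.2) =
      ∑ p ∈ swapPairs b i₀, (#(swapPairs b i₀) : ℝ≥0∞)⁻¹ •
        (ENNReal.ofReal (1 - (b : ℝ) / n) • N.map (batchMean b g p.1 + ·) +
          ENNReal.ofReal ((b : ℝ) / n) •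
            N.map (batchMean b g (insert i₀ (p.1.erase p.2)) + ·)) := by
  have hswap := inv_card_smul_sum_powersetCard hb₀ (by simpa using hb) i₀
    fun B => N.map (batchMean b g B + ·)
  rw [Fintype.card_fin] at hswap
  exact (map_batchMeasure_prod N fun B => measurable_const_add (batchMean b g B)).trans hswap

theorem lt_of_div_mul_exp_le_one {α : ℝ} (hn : 0 < n) (hα : 0 ≤ α)
    (h : (b / n : ℝ) * (5 / 2) * Real.exp α ≤ 1) : b < n := by
  have hn' : (0 : ℝ) < n := by exact_mod_cast hn
  have hexp : 1 ≤ Real.exp α := Real.one_le_exp hα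
  have hfrac : (b : ℝ) / n < 1 := by nlinarith [show (0 : ℝ) ≤ b / n by positivity]
  exact_mod_cast (div_lt_one hn').1 hfrac

theorem HasGaussianShift.renyiDivLE_batchMean {N : Measure E} [IsProbabilityMeasure N]
    {v α x G : ℝ} {g g' : Fin n → E} {i₀ : Fin n} (hN : HasGaussianShift N v) (hv : 0 < v)
    (hα : 1 < α) (hb₀ : 0 < b) (hγα : (b / n : ℝ) * (5 / 2) * Real.exp α ≤ 1) (hx : x ≤ 2 / 3)
    (hGx : (2 * G / b) ^ 2 / v ≤ x) (hg : ∀ i, ‖g i‖ ≤ G) (hg' : ∀ i, ‖g' i‖ ≤ G)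
    (hgg' : ∀ i, i ≠ i₀ → g i = g' i) :
    RenyiDivLE α (5 * α * (b / n) ^ 2 * x)
      (((batchMeasure n b).prod N).map fun y => batchMean b g y.1 + y.2)
      (((batchMeasure n b).prod N).map fun y => batchMean b g' y.1 + y.2) := by
  have hb : b < n := lt_of_div_mul_exp_le_one i₀.pos (zero_le_one.trans hα.le) hγα
  have hweights : ∑ _p ∈ swapPairs b i₀, (#(swapPairs b i₀) : ℝ≥0∞)⁻¹ = 1 := by
    have hne := swapPairs_nonempty hb₀ (by simpa using hb) i₀
    rw [sum_const, nsmul_eq_mul,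
      ENNReal.mul_inv_cancel (by simpa using hne.ne_empty) (ENNReal.natCast_ne_top _)]
  have hclose {c a u w : E} (h : c - a = (b : ℝ)⁻¹ • (u - w)) (hu : ‖u‖ ≤ G) (hw : ‖w‖ ≤ G) :
      ‖c - a‖ ^ 2 / v ≤ x := by
    refine le_trans ?_ hGx
    rw [h]
    gcongr
    exact norm_inv_natCast_smul_sub_le b hu hw
  rw [map_batchMean_add hb₀ hb i₀, map_batchMean_add hb₀ hb i₀]
  refine .sum_smul hα hweights fun p hp => ?_
  obtain ⟨⟨-, hi⟩, hj⟩ := mem_swapPairs.1 hp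
  have hoff : ∀ i ∈ p.1, g i = g' i := fun i hip => hgg' i (ne_of_mem_of_not_mem hip hi)
  have hbase : batchMean b g p.1 = batchMean b g' p.1 := congrArg _ (sum_congr rfl hoff)
  have hswap := batchMean_swap_sub b g hi hj
  have hswap' := batchMean_swap_sub b g' hi hj
  rw [← hbase] at hswap' ⊢
  refine hN.renyiDivLE_mixture hv hα (by positivity) hγα hx (hclose hswap (hg _) (hg _))
    (hclose hswap' (hg' _) (hg' _)) (hclose ?_ (hg i₀) (hg' i₀))
  rw [← sub_sub_sub_cancel_right, hswap, hswap', hoff _ hj, ← smul_sub, sub_sub_sub_cancel_right]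

end Subsampling

/-! ### Noisy stochastic gradient descent -/

section Parameters

variable {n b T : ℕ} {μ ε α : ℝ}

theorem pos_of_three_halves_le (hμ : 0 < μ) (hε : 0 < ε)
    (h : 5 * b ^ 2 * T * α / (μ * n ^ 2 * ε) ≥ 3 / 2) : 0 < n ∧ 0 < b ∧ 0 < T ∧ 0 < α := by
  have hquot : 0 < 5 * b ^ 2 * T * α / (μ * n ^ 2 * ε) := by linarith
  refine ⟨Nat.pos_of_ne_zero ?_, Nat.pos_of_ne_zero ?_, Nat.pos_of_ne_zero ?_, ?_⟩
  · rintro rfl; simp at hquot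
  · rintro rfl; simp at hquot
  · rintro rfl; simp at hquot
  · contrapose! hquot
    exact div_nonpos_of_nonpos_of_nonneg (mul_nonpos_of_nonneg_of_nonpos (by positivity) hquot)
      (by positivity)

theorem noise_variance_pos {G : ℝ} (hG : G ≠ 0) (hμ : 0 < μ) (hε : 0 < ε)
    (h : 5 * b ^ 2 * T * α / (μ * n ^ 2 * ε) ≥ 3 / 2) :
    0 < 20 * T * α * G ^ 2 / (μ * n ^ 2 * ε) := by
  obtain ⟨hn, -, hT, hα⟩ := pos_of_three_halves_le hμ hε h
  positivity

theorem sq_div_noise_variance {G : ℝ} (hG : G ≠ 0) :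
    (2 * G / b) ^ 2 / (20 * T * α * G ^ 2 / (μ * n ^ 2 * ε)) =
      (5 * b ^ 2 * T * α / (μ * n ^ 2 * ε))⁻¹ := by
  field_simp
  ring

theorem privacy_budget_eq {δ : ℝ} (hμ : μ ∈ Set.Ioo (0 : ℝ) 1) (hε : 0 < ε) (hα_one : 1 < α)
    (hα : α = Real.log (1 / δ) / ((1 - μ) * ε) + 1)
    (h : 5 * b ^ 2 * T * α / (μ * n ^ 2 * ε) ≥ 3 / 2) :
    T * (5 * α * (b / n) ^ 2 * (5 * b ^ 2 * T * α / (μ * n ^ 2 * ε))⁻¹) +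
      Real.log (1 / δ) / (α - 1) = ε := by
  obtain ⟨hn, hb, hT, -⟩ := pos_of_three_halves_le hμ.1 hε h
  have hμ₀ : 0 < μ := hμ.1
  have hμ₁ : 0 < 1 - μ := sub_pos.2 hμ.2
  have hlog : Real.log (1 / δ) / (α - 1) = (1 - μ) * ε := by
    rw [div_eq_iff (sub_pos.2 hα_one).ne', hα]; field_simp; ring
  -- The noise variance is chosen so that the `T` steps together spend exactly `μ * ε`.
  have hsteps : T * (5 * α * (b / n) ^ 2 * (5 * b ^ 2 * T * α / (μ * n ^ 2 * ε))⁻¹) = μ * ε := by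
    field_simp
  rw [hlog, hsteps]
  ring

theorem div_mul_exp_le_one (hμ : 0 < μ) (hε : 0 < ε)
    (hα₁ : α ≤ Real.log (μ * n ^ 3 * ε / (5 * b ^ 3 * T * α + μ * b * n ^ 2 * ε)))
    (hα₂ : 5 * b ^ 2 * T * α / (μ * n ^ 2 * ε) ≥ 3 / 2) :
    (b / n : ℝ) * (5 / 2) * Real.exp α ≤ 1 := by
  obtain ⟨hn, hb, hT, hα⟩ := pos_of_three_halves_le hμ hε hα₂
  rw [Real.le_log_iff_exp_le (by positivity)] at hα₁
  calc (b / n : ℝ) * (5 / 2) * Real.exp α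
      ≤ b / n * (5 * b ^ 2 * T * α / (μ * n ^ 2 * ε) + 1) *
          (μ * n ^ 3 * ε / (5 * b ^ 3 * T * α + μ * b * n ^ 2 * ε)) := by
        gcongr
        linarith
    _ = 1 := by field_simp

end Parameters

/-- One step of noisy minibatch SGD from the state `s`: the noisy batch mean of the vectors
`g i s` is fed to an arbitrary update `Ψ`. -/
noncomputable def noisySGDStep {S E : Type*} [NormedAddCommGroup E] [InnerProductSpace ℝ E] {n : ℕ}
    (b : ℕ) (Ψ : S → E → S) (g : Fin n → S → E) (s : S) (y : Finset (Fin n) × E) : S :=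
  Ψ s (batchMean b (fun i => g i s) y.1 + y.2)

section NoisySGD

variable {S E : Type*} [MeasurableSpace S] [NormedAddCommGroup E] [InnerProductSpace ℝ E]
  [MeasurableSpace E] [BorelSpace E] [SecondCountableTopology E] {n b : ℕ}

theorem measurable_noisySGDStep {Ψ : S → E → S} (hΨ : Measurable (Function.uncurry Ψ))
    {g : Fin n → S → E} (hg : ∀ i, Measurable (g i)) :
    Measurable (Function.uncurry (noisySGDStep b Ψ g)) := by
  have hmean : Measurable fun q : Finset (Fin n) × S => batchMean b (fun i => g i q.2) q.1 :=
    measurable_from_prod_countable_right fun B =>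
      (Finset.measurable_fun_sum B fun i _ => hg i).const_smul _
  exact hΨ.comp (measurable_fst.prodMk
    ((hmean.comp (measurable_snd.fst.prodMk measurable_fst)).add measurable_snd.snd))

theorem HasGaussianShift.renyiDivLE_noisySGDStep {N : Measure E} [IsProbabilityMeasure N]
    {v α x G : ℝ} {g g' : Fin n → S → E} {i₀ : Fin n} {s : S} {Ψ : S → E → S}
    (hN : HasGaussianShift N v) (hv : 0 < v) (hα : 1 < α) (hb₀ : 0 < b)
    (hγα : (b / n : ℝ) * (5 / 2) * Real.exp α ≤ 1) (hx : x ≤ 2 / 3)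
    (hGx : (2 * G / b) ^ 2 / v ≤ x) (hΨ : Measurable (Ψ s)) (hg : ∀ i, ‖g i s‖ ≤ G)
    (hg' : ∀ i, ‖g' i s‖ ≤ G) (hgg' : ∀ i, i ≠ i₀ → g i s = g' i s) :
    RenyiDivLE α (5 * α * (b / n) ^ 2 * x)
      (((batchMeasure n b).prod N).map (noisySGDStep b Ψ g s))
      (((batchMeasure n b).prod N).map (noisySGDStep b Ψ g' s)) := by
  have hmean (u : Fin n → E) : Measurable fun y : Finset (Fin n) × E => batchMean b u y.1 + y.2 :=
    ((measurable_from_top (f := batchMean b u)).comp measurable_fst).add measurable_snd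
  have := (hN.renyiDivLE_batchMean hv hα hb₀ hγα hx hGx hg hg' hgg').map hΨ
  rwa [Measure.map_map hΨ (hmean _), Measure.map_map hΨ (hmean _)] at this

theorem dp_lssgd_privacy_general {T : ℕ} {G ε δ μ α v : ℝ} (hG : 0 < G) (hε : 0 < ε)
    (hδ : 0 < δ) (hμ : μ ∈ Set.Ioo (0 : ℝ) 1) (hα : α = Real.log (1 / δ) / ((1 - μ) * ε) + 1)
    (hα₁ : α ≤ Real.log (μ * n ^ 3 * ε / (5 * b ^ 3 * T * α + μ * b * n ^ 2 * ε)))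
    (hα₂ : 5 * b ^ 2 * T * α / (μ * n ^ 2 * ε) ≥ 3 / 2)
    (hv : v = 20 * T * α * G ^ 2 / (μ * n ^ 2 * ε))
    {N : Measure E} [IsProbabilityMeasure N] (hN : HasGaussianShift N v)
    {Ψ : Fin T → S → E → S} (hΨ : ∀ k, Measurable (Function.uncurry (Ψ k)))
    {g g' : Fin n → S → E} (hg : ∀ i, Measurable (g i)) (hg' : ∀ i, Measurable (g' i))
    (hgG : ∀ i s, ‖g i s‖ ≤ G) (hg'G : ∀ i s, ‖g' i s‖ ≤ G)
    (hneighbor : ∃ i₀ : Fin n, ∀ i, i ≠ i₀ → g i = g' i)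
    {w₀ : S} {w w' : ℕ → (Fin T → Finset (Fin n) × E) → S}
    (hw : IsRandomRecursion (fun k => noisySGDStep b (Ψ k) g) w₀ w)
    (hw' : IsRandomRecursion (fun k => noisySGDStep b (Ψ k) g') w₀ w')
    {O : Set S} (hO : MeasurableSet O) :
    (Measure.pi fun _ : Fin T => (batchMeasure n b).prod N) {ω | w T ω ∈ O} ≤
      ENNReal.ofReal (Real.exp ε) *
          (Measure.pi fun _ : Fin T => (batchMeasure n b).prod N) {ω | w' T ω ∈ O} +
        ENNReal.ofReal δ := by
  obtain ⟨i₀, hi₀⟩ := hneighbor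
  obtain ⟨hn, hb, -, hα₀⟩ := pos_of_three_halves_le hμ.1 hε hα₂
  have hμ₀ : 0 < μ := hμ.1
  have hμ₁ : 0 < 1 - μ := sub_pos.2 hμ.2
  have hγα := div_mul_exp_le_one hμ₀ hε hα₁ hα₂
  have := isProbabilityMeasure_batchMeasure (lt_of_div_mul_exp_le_one hn hα₀.le hγα).le
  rcases le_or_gt 1 δ with hδ₁ | hδ₁
  · exact prob_le_one.trans (le_add_left (ENNReal.one_le_ofReal.2 hδ₁))
  have hα_one : 1 < α := by
    have := Real.log_pos (one_lt_one_div hδ hδ₁)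
    rw [hα, lt_add_iff_pos_left]
    positivity
  have hΦ (k) := measurable_noisySGDStep (b := b) (hΨ k) hg
  have hΦ' (k) := measurable_noisySGDStep (b := b) (hΨ k) hg'
  have hx : (2 * G / b) ^ 2 / v = (5 * b ^ 2 * T * α / (μ * n ^ 2 * ε))⁻¹ :=
    hv ▸ sq_div_noise_variance hG.ne'
  have hx_le : (5 * b ^ 2 * T * α / (μ * n ^ 2 * ε))⁻¹ ≤ 2 / 3 :=
    (inv_anti₀ (by norm_num) hα₂).trans_eq (by norm_num)
  have hstep (k : Fin T) (s : S) :=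
    hN.renyiDivLE_noisySGDStep (hv ▸ noise_variance_pos hG.ne' hμ₀ hε hα₂) hα_one hb hγα hx_le hx.le
      (hΨ k).of_uncurry_left (hgG · s) (hg'G · s) fun i hi => congrFun (hi₀ i hi) s
  have hprivacy := (hw.renyiDivLE_map hα_one hw' hΦ hΦ' hstep le_rfl).measure_le hα_one hδ hO
  rw [privacy_budget_eq hμ hε hα_one hα hα₂, Measure.map_apply (hw.measurable hΦ le_rfl) hO,
    Measure.map_apply (hw'.measurable hΦ' le_rfl) hO] at hprivacy
  exact hprivacy

end NoisySGD

section Gradient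

variable {E : Type*} [NormedAddCommGroup E] [InnerProductSpace ℝ E] [CompleteSpace E]

theorem norm_gradient_le_of_lipschitzWith_toNNReal {f : E → ℝ} {G : ℝ} (hG : 0 ≤ G)
    (hf : LipschitzWith (Real.toNNReal G) f) (x : E) : ‖gradient f x‖ ≤ G := by
  rw [gradient, LinearIsometryEquiv.norm_map]
  exact (norm_fderiv_le_of_lipschitz ℝ hf).trans_eq (Real.coe_toNNReal _ hG)

theorem measurable_gradient [MeasurableSpace E] [BorelSpace E] (f : E → ℝ) :
    Measurable (gradient f) :=
  (InnerProductSpace.toDual ℝ E).symm.continuous.measurable.comp (measurable_fderiv ℝ f)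

end Gradient

/-- Privacy guarantee of DP-LSSGD: with per-coordinate Gaussian noise variance
`ν² = 20TαG²/(μn²ε)`, where `α = log(1/δ)/((1-μ)ε) + 1` satisfies
`α ≤ log(μn³ε/(5b³Tα + μbn²ε))` and `5b²Tα/(μn²ε) ≥ 3/2`, the final iterate of `T`
steps of DP-LSSGD is `(ε, δ)`-differentially private with respect to changing one of
the `G`-Lipschitz component functions. -/
theorem dp_lssgd_privacy
    (σ : ℝ) (hσ : 0 ≤ σ) (d n b T : ℕ) (hd : 3 ≤ d) (hn : 1 ≤ n) (hb : 1 ≤ b)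
    (hbn : b ≤ n) (hT : 1 ≤ T)
    (G ε δ μ : ℝ) (hG : 0 < G) (hε : 0 < ε) (hδ : 0 < δ) (hμ : μ ∈ Set.Ioo (0 : ℝ) 1)
    (α : ℝ) (hα : α = Real.log (1 / δ) / ((1 - μ) * ε) + 1)
    (hα₁ : α ≤ Real.log (μ * n ^ 3 * ε / (5 * b ^ 3 * T * α + μ * b * n ^ 2 * ε)))
    (hα₂ : 5 * b ^ 2 * T * α / (μ * n ^ 2 * ε) ≥ 3 / 2)
    (ν : ℝ) (hν : ν ^ 2 = 20 * T * α * G ^ 2 / (μ * n ^ 2 * ε))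
    (f f' : Fin n → EuclideanSpace ℝ (Fin d) → ℝ)
    (hflip : ∀ i, LipschitzWith (Real.toNNReal G) (f i))
    (hf'lip : ∀ i, LipschitzWith (Real.toNNReal G) (f' i))
    (hfdiff : ∀ i, Differentiable ℝ (f i))
    (hf'diff : ∀ i, Differentiable ℝ (f' i))
    (hneighbor : ∃ i₀ : Fin n, ∀ i : Fin n, i ≠ i₀ → f i = f' i)
    (w₀ : EuclideanSpace ℝ (Fin d)) (η : ℕ → ℝ)
    (w w' : ℕ → (Fin T → Finset (Fin n) × EuclideanSpace ℝ (Fin d)) →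
      EuclideanSpace ℝ (Fin d))
    (hw0 : ∀ ω, w 0 ω = w₀) (hw'0 : ∀ ω, w' 0 ω = w₀)
    (hwrec : ∀ (k : Fin T) ω,
      w (k.val + 1) ω = w k.val ω - η k.val •
        (Matrix.toEuclideanLin (lapMat σ d)⁻¹)
          ((b : ℝ)⁻¹ • (∑ i ∈ (ω k).1, gradient (f i) (w k.val ω)) + (ω k).2))
    (hw'rec : ∀ (k : Fin T) ω,
      w' (k.val + 1) ω = w' k.val ω - η k.val •
        (Matrix.toEuclideanLin (lapMat σ d)⁻¹)
          ((b : ℝ)⁻¹ • (∑ i ∈ (ω k).1, gradient (f' i) (w' k.val ω)) + (ω k).2)) :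
    ∀ O : Set (EuclideanSpace ℝ (Fin d)), MeasurableSet O →
      (Measure.pi fun _ : Fin T => (batchMeasure n b).prod (noiseMeasure d ν))
          {ω | w T ω ∈ O}
        ≤ ENNReal.ofReal (Real.exp ε) *
            (Measure.pi fun _ : Fin T => (batchMeasure n b).prod (noiseMeasure d ν))
              {ω | w' T ω ∈ O}
          + ENNReal.ofReal δ := by
  intro O hO
  have hν₀ : 0 < ν ^ 2 := hν ▸ noise_variance_pos hG.ne' hμ.1 hε hα₂
  have hA := (Matrix.toEuclideanLin (lapMat σ d)⁻¹).continuous_of_finiteDimensional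
  exact dp_lssgd_privacy_general hG hε hδ hμ hα hα₁ hα₂ hν (hasGaussianShift_noiseMeasure d hν₀)
    (Ψ := fun k e z => e - η k • Matrix.toEuclideanLin (lapMat σ d)⁻¹ z) (fun k => by fun_prop)
    (fun i => measurable_gradient (f i)) (fun i => measurable_gradient (f' i))
    (fun i => norm_gradient_le_of_lipschitzWith_toNNReal hG.le (hflip i))
    (fun i => norm_gradient_le_of_lipschitzWith_toNNReal hG.le (hf'lip i))
    (hneighbor.imp fun i₀ h i hi => congrArg gradient (h i hi)) ⟨hw0, hwrec⟩ ⟨hw'0, hw'rec⟩ hO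
end
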